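/- arXiv:1510.03329 — 5 statements merged into one kernel-verified Lean document; each statement's English description precedes it below -/
import Mathlib

section
/- Let K₂ ≥ K₁ > 0 and Δ ∈ ℝ. For each t > 0 let ψ_t : [0,∞) → [K₁, K₂] be measurable, and assume that for every function t ↦ y_t with y_t → ∞ as t → ∞ one has ψ_t(y_t) → e^Δ as t → ∞. Let A > 0, β > −1, and let φ : [0,∞) → ℝ be bounded and measurable with φ(y) ~ A y^β as y → ∞. Let ε : (0,∞) → ℝ satisfy √t · ε_t → 0 as t → ∞. Then, as t → ∞, ∫₀^∞ φ(y) e^{−y²/(4t) + ε_t y} ψ_t(y) dy ~ A 2^β e^Δ Γ((1+β)/2) t^{(1+β)/2}. -/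
open MeasureTheory Filter Real Set Asymptotics

/-
Substituting `y = √t u` turns `t ^ (-(1 + β) / 2)` times the integral into the integral of
`φ (√t u) / √t ^ β * k_t (√t u)`, where the first factor tends to `A u ^ β` and the kernel
`k_t (√t u) = exp (-u ^ 2 / 4 + √t ε_t u) ψ_t (√t u)` tends to `exp (-u ^ 2 / 4)` times the
limit of `ψ_t`. Beyond a large `Y` the bound `|φ y| ≤ M y ^ β` supplies an integrable majorant
`M u ^ β * W u` with `W` Gaussian. Over `(0, Y]` the original integral stays bounded as `t → ∞`,
hence is negligible against `t ^ ((1 + β) / 2)` because `β > -1`.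
-/

section ScalingLimits

variable {ι : Type*} {l : Filter ι} {s : ι → ℝ} {k : ι → ℝ → ℝ} {φ W κ : ℝ → ℝ} {A B M β : ℝ}

lemma aestronglyMeasurable_comp_mul_left_Ioi {E : Type*} [TopologicalSpace E] {f : ℝ → E} {a : ℝ}
    (ha : 0 < a) (hf : AEStronglyMeasurable f (volume.restrict (Ioi 0))) :
    AEStronglyMeasurable (fun u => f (a * u)) (volume.restrict (Ioi 0)) := by
  have hquasi : Measure.QuasiMeasurePreserving (a * ·) (volume : Measure ℝ) volume :=
    ⟨measurable_const_mul a, by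
      rw [Real.map_volume_mul_left ha.ne']
      exact Measure.smul_absolutelyContinuous⟩
  exact hf.comp_quasiMeasurePreserving
    (hquasi.restrict fun u (hu : 0 < u) => mul_pos ha hu)

lemma integral_Ioi_mul_div_rpow (f g : ℝ → ℝ) (β : ℝ) {a : ℝ} (ha : 0 < a) :
    (∫ y in Ioi 0, f y * g y) / a ^ (1 + β) =
      ∫ u in Ioi 0, f (a * u) / a ^ β * g (a * u) := by
  have hdilate := integral_comp_mul_left_Ioi (fun y => f y * g y) 0 ha
  rw [mul_zero, smul_eq_mul] at hdilate
  calc (∫ y in Ioi 0, f y * g y) / a ^ (1 + β)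
      = (∫ u in Ioi 0, f (a * u) * g (a * u)) / a ^ β := by
        rw [hdilate, rpow_add ha, rpow_one]
        field_simp
    _ = ∫ u in Ioi 0, f (a * u) / a ^ β * g (a * u) := by
        rw [← integral_div]
        simp only [div_mul_eq_mul_div]

lemma tendsto_comp_mul_div_rpow (hs : Tendsto s l atTop)
    (hφ : Tendsto (fun y => φ y / y ^ β) atTop (nhds A)) {u : ℝ} (hu : 0 < u) :
    Tendsto (fun i => φ (s i * u) / s i ^ β) l (nhds (A * u ^ β)) := by
  refine ((hφ.comp (hs.atTop_mul_const hu)).mul_const (u ^ β)).congr' ?_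
  filter_upwards [hs.eventually_gt_atTop 0] with i hi
  have := rpow_pos_of_pos hu β
  simp only [Function.comp_apply, mul_rpow hi.le hu.le]
  field_simp

lemma abs_comp_mul_div_rpow_mul_le {g : ℝ → ℝ} {a : ℝ} (ha : 0 < a)
    (hφ : ∀ y > 0, |φ y| ≤ M * y ^ β) (hg : ∀ u > 0, |g (a * u)| ≤ W u) {u : ℝ} (hu : 0 < u) :
    |φ (a * u) / a ^ β * g (a * u)| ≤ M * (u ^ β * W u) := by
  have haβ : 0 < a ^ β := rpow_pos_of_pos ha β
  have hφu : |φ (a * u) / a ^ β| ≤ M * u ^ β := by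
    rw [abs_div, abs_of_pos haβ, div_le_iff₀ haβ, mul_assoc, mul_comm (u ^ β),
      ← mul_rpow ha.le hu.le]
    exact hφ _ (mul_pos ha hu)
  rw [abs_mul, ← mul_assoc]
  exact mul_le_mul hφu (hg u hu) (abs_nonneg _) ((abs_nonneg _).trans hφu)

lemma integrableOn_Ioi_mul_of_abs_le_rpow {g : ℝ → ℝ} {a : ℝ} (ha : 0 < a)
    (hφmeas : AEStronglyMeasurable φ (volume.restrict (Ioi 0)))
    (hφ : ∀ y > 0, |φ y| ≤ M * y ^ β)
    (hgmeas : AEStronglyMeasurable g (volume.restrict (Ioi 0)))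
    (hg : ∀ u > 0, |g (a * u)| ≤ W u) (hW : IntegrableOn (fun u => u ^ β * W u) (Ioi 0)) :
    IntegrableOn (fun y => φ y * g y) (Ioi 0) := by
  have haβ : a ^ β ≠ 0 := (rpow_pos_of_pos ha β).ne'
  have hscaled : IntegrableOn (fun u => φ (a * u) / a ^ β * g (a * u)) (Ioi 0) :=
    (hW.const_mul M).mono'
      (aestronglyMeasurable_comp_mul_left_Ioi ha
        ((hφmeas.div₀ aestronglyMeasurable_const).mul hgmeas))
      (ae_restrict_of_forall_mem measurableSet_Ioi fun u hu =>
        abs_comp_mul_div_rpow_mul_le ha hφ hg hu)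
  rw [integrableOn_Ioi_comp_mul_left_iff (fun y => φ y / a ^ β * g y) 0 ha, mul_zero] at hscaled
  refine (hscaled.const_mul (a ^ β)).congr (Eventually.of_forall fun y => ?_)
  field_simp

lemma tendsto_integral_mul_div_rpow_of_abs_le_rpow [l.IsCountablyGenerated]
    (hs : Tendsto s l atTop)
    (hφmeas : AEStronglyMeasurable φ (volume.restrict (Ioi 0)))
    (hφ : ∀ y > 0, |φ y| ≤ M * y ^ β)
    (hφlim : Tendsto (fun y => φ y / y ^ β) atTop (nhds A))
    (hkmeas : ∀ᶠ i in l, AEStronglyMeasurable (k i) (volume.restrict (Ioi 0)))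
    (hk : ∀ᶠ i in l, ∀ u > 0, |k i (s i * u)| ≤ W u)
    (hklim : ∀ u > 0, Tendsto (fun i => k i (s i * u)) l (nhds (κ u)))
    (hW : IntegrableOn (fun u => u ^ β * W u) (Ioi 0)) :
    Tendsto (fun i => (∫ y in Ioi 0, φ y * k i y) / s i ^ (1 + β)) l
      (nhds (A * ∫ u in Ioi 0, u ^ β * κ u)) := by
  have hspos : ∀ᶠ i in l, 0 < s i := hs.eventually_gt_atTop 0
  suffices Tendsto (fun i => ∫ u in Ioi 0, φ (s i * u) / s i ^ β * k i (s i * u)) l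
      (nhds (∫ u in Ioi 0, A * u ^ β * κ u)) by
    simp only [mul_assoc, integral_const_mul] at this
    refine this.congr' ?_
    filter_upwards [hspos] with i hi
    exact (integral_Ioi_mul_div_rpow φ (k i) β hi).symm
  refine tendsto_integral_filter_of_dominated_convergence (fun u => M * (u ^ β * W u)) ?_ ?_
    (hW.const_mul M) ?_
  · filter_upwards [hspos, hkmeas] with i hi hki
    exact aestronglyMeasurable_comp_mul_left_Ioi hi
      ((hφmeas.div₀ aestronglyMeasurable_const).mul hki)
  · filter_upwards [hspos, hk] with i hi hki
    exact ae_restrict_of_forall_mem measurableSet_Ioi fun u hu =>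
      abs_comp_mul_div_rpow_mul_le hi hφ hki hu
  · exact ae_restrict_of_forall_mem measurableSet_Ioi fun u hu =>
      (tendsto_comp_mul_div_rpow hs hφlim hu).mul (hklim u hu)

lemma tendsto_integral_mul_div_zero_of_abs_le {X : Type*} [MeasurableSpace X] {μ : Measure X}
    {f : X → ℝ} {g : ι → X → ℝ} {r : ι → ℝ} (hf : Integrable f μ)
    (hg : ∀ᶠ i in l, ∀ᵐ x ∂μ, |g i x| ≤ B) (hr : Tendsto r l atTop) :
    Tendsto (fun i => (∫ x, f x * g i x ∂μ) / r i) l (nhds 0) := by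
  refine squeeze_zero_norm' ?_ (hr.const_div_atTop (∫ x, |f x| * B ∂μ))
  filter_upwards [hg, hr.eventually_gt_atTop 0] with i hgi hri
  rw [norm_div, Real.norm_of_nonneg hri.le]
  gcongr
  refine norm_integral_le_of_norm_le (hf.abs.mul_const B) (hgi.mono fun x hx => ?_)
  rw [norm_mul, Real.norm_eq_abs, Real.norm_eq_abs]
  gcongr

lemma exists_forall_pos_abs_indicator_Ioi_le_mul_rpow
    (hφ : Tendsto (fun y => φ y / y ^ β) atTop (nhds A)) :
    ∃ M Y, 0 ≤ Y ∧ ∀ y > 0, |(Ioi Y).indicator φ y| ≤ M * y ^ β := by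
  have hbound : ∀ᶠ y in atTop, |φ y / y ^ β| ≤ |A| + 1 :=
    hφ.abs.eventually_le_const (lt_add_one |A|)
  obtain ⟨Y, hY⟩ := eventually_atTop.1 hbound
  refine ⟨|A| + 1, max Y 0, le_max_right _ _, fun y hy => ?_⟩
  have hyβ : 0 < y ^ β := rpow_pos_of_pos hy β
  by_cases hyY : y ∈ Ioi (max Y 0)
  · have := hY y ((le_max_left _ _).trans (le_of_lt hyY))
    rwa [abs_div, abs_of_pos hyβ, div_le_iff₀ hyβ, ← indicator_of_mem hyY φ] at this
  · rw [indicator_of_notMem hyY, abs_zero]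
    positivity

lemma setIntegral_Ioi_eq_setIntegral_Ioc_add_indicator {E : Type*} [NormedAddCommGroup E]
    [NormedSpace ℝ E] {f : ℝ → E} {a b : ℝ} (hab : a ≤ b)
    (hIoc : IntegrableOn f (Ioc a b)) (hIoi : IntegrableOn ((Ioi b).indicator f) (Ioi a)) :
    ∫ x in Ioi a, f x = (∫ x in Ioc a b, f x) + ∫ x in Ioi a, (Ioi b).indicator f x := by
  have hinter : Ioi a ∩ Ioi b = Ioi b := inter_eq_right.2 (Ioi_subset_Ioi hab)
  rw [IntegrableOn, integrable_indicator_iff measurableSet_Ioi, IntegrableOn,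
    Measure.restrict_restrict measurableSet_Ioi, inter_comm, hinter] at hIoi
  rw [setIntegral_indicator measurableSet_Ioi, hinter,
    ← setIntegral_union Ioc_disjoint_Ioi_same measurableSet_Ioi hIoc hIoi,
    Ioc_union_Ioi_eq_Ioi hab]

theorem tendsto_integral_mul_div_rpow_of_locallyIntegrableOn [l.IsCountablyGenerated]
    (hβ : -1 < β) (hs : Tendsto s l atTop)
    (hφ : LocallyIntegrableOn φ (Ici 0))
    (hφlim : Tendsto (fun y => φ y / y ^ β) atTop (nhds A))
    (hkmeas : ∀ᶠ i in l, AEStronglyMeasurable (k i) (volume.restrict (Ioi 0)))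
    (hk : ∀ᶠ i in l, ∀ u > 0, |k i (s i * u)| ≤ W u)
    (hklim : ∀ u > 0, Tendsto (fun i => k i (s i * u)) l (nhds (κ u)))
    (hW : IntegrableOn (fun u => u ^ β * W u) (Ioi 0)) (hWB : ∀ u > 0, W u ≤ B) :
    Tendsto (fun i => (∫ y in Ioi 0, φ y * k i y) / s i ^ (1 + β)) l
      (nhds (A * ∫ u in Ioi 0, u ^ β * κ u)) := by
  obtain ⟨M, Y, hY, hφY⟩ := exists_forall_pos_abs_indicator_Ioi_le_mul_rpow hφlim
  have hφYmeas : AEStronglyMeasurable ((Ioi Y).indicator φ) (volume.restrict (Ioi 0)) :=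
    (hφ.aestronglyMeasurable.mono_set Ioi_subset_Ici_self).indicator measurableSet_Ioi
  have hφYlim : Tendsto (fun y => (Ioi Y).indicator φ y / y ^ β) atTop (nhds A) := by
    refine hφlim.congr' ?_
    filter_upwards [eventually_gt_atTop Y] with y hy
    rw [indicator_of_mem (mem_Ioi.2 hy)]
  have hφint : IntegrableOn φ (Ioc 0 Y) :=
    (hφ.integrableOn_compact_subset Icc_subset_Ici_self isCompact_Icc).mono_set
      Ioc_subset_Icc_self
  have hkB : ∀ᶠ i in l, ∀ᵐ y ∂volume.restrict (Ioc 0 Y), |k i y| ≤ B := by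
    filter_upwards [hs.eventually_gt_atTop 0, hk] with i hi hki
    refine ae_restrict_of_forall_mem measurableSet_Ioc fun y hy => ?_
    have hyi : 0 < y / s i := div_pos hy.1 hi
    simpa only [mul_div_cancel₀ y hi.ne'] using (hki _ hyi).trans (hWB _ hyi)
  have hlocal : Tendsto (fun i => (∫ y in Ioc 0 Y, φ y * k i y) / s i ^ (1 + β)) l (nhds 0) :=
    tendsto_integral_mul_div_zero_of_abs_le hφint hkB
      ((tendsto_rpow_atTop (by linarith)).comp hs)
  have htail := tendsto_integral_mul_div_rpow_of_abs_le_rpow hs hφYmeas hφY hφYlim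
    hkmeas hk hklim hW
  rw [← zero_add (A * _)]
  refine (hlocal.add htail).congr' ?_
  filter_upwards [hs.eventually_gt_atTop 0, hkmeas, hk, hkB] with i hi hkmi hki hkBi
  have hIoc : IntegrableOn (fun y => φ y * k i y) (Ioc 0 Y) :=
    hφint.mul_bdd (hkmi.mono_set Ioc_subset_Ioi_self) hkBi
  have hIoi := integrableOn_Ioi_mul_of_abs_le_rpow hi hφYmeas hφY hkmi hki hW
  simp only [← indicator_mul_left] at hIoi ⊢
  rw [← add_div, ← setIntegral_Ioi_eq_setIntegral_Ioc_add_indicator hY hIoc hIoi]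

end ScalingLimits

lemma integral_rpow_mul_exp_neg_sq_div_four {β : ℝ} (hβ : -1 < β) :
    ∫ u in Ioi (0 : ℝ), u ^ β * exp (-u ^ 2 / 4) = 2 ^ β * Gamma ((1 + β) / 2) := by
  have hpow : (1 / 4 : ℝ) ^ (-(β + 1) / 2) = 2 * 2 ^ β := by
    rw [show (1 / 4 : ℝ) = 2 ^ (-2 : ℝ) by rw [rpow_neg zero_le_two]; norm_num,
      ← rpow_mul zero_le_two, show (-2 : ℝ) * (-(β + 1) / 2) = 1 + β by ring,
      rpow_add two_pos, rpow_one]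
  calc ∫ u in Ioi (0 : ℝ), u ^ β * exp (-u ^ 2 / 4)
      = ∫ u in Ioi (0 : ℝ), u ^ β * exp (-(1 / 4) * u ^ (2 : ℝ)) := by
        simp only [rpow_two, neg_mul, one_div_mul_eq_div, neg_div]
    _ = (1 / 4) ^ (-(β + 1) / 2) * (1 / 2) * Gamma ((β + 1) / 2) :=
        integral_rpow_mul_exp_neg_mul_rpow two_pos hβ (by norm_num)
    _ = 2 ^ β * Gamma ((1 + β) / 2) := by
        rw [hpow, add_comm β 1]
        ring

lemma exp_neg_sq_div_four_add_mul_le {δ u : ℝ} (hδ : δ ≤ 1) (hu : 0 ≤ u) :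
    exp (-u ^ 2 / 4 + δ * u) ≤ exp 2 * exp (-(1 / 8) * u ^ 2) := by
  rw [← exp_add, exp_le_exp]
  have hδu : δ * u ≤ u := mul_le_of_le_one_left hu hδ
  linarith [sq_nonneg (u - 4)]

/-- The kernel `k_t` against which `φ` is integrated: the heat kernel with drift `ε t`, without its
normalizing constant, times the weight `ψ t`. -/
noncomputable def weightedHeatKernel (ε : ℝ → ℝ) (ψ : ℝ → ℝ → ℝ) (t y : ℝ) : ℝ :=
  exp (-y ^ 2 / (4 * t) + ε t * y) * ψ t y

section WeightedHeatKernel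

variable {K L : ℝ} {ε : ℝ → ℝ} {ψ : ℝ → ℝ → ℝ}

lemma weightedHeatKernel_sqrt_mul (ε : ℝ → ℝ) (ψ : ℝ → ℝ → ℝ) {t : ℝ} (ht : 0 < t) (u : ℝ) :
    weightedHeatKernel ε ψ t (√t * u) = exp (-u ^ 2 / 4 + √t * ε t * u) * ψ t (√t * u) := by
  have hexponent : -(√t * u) ^ 2 / (4 * t) + ε t * (√t * u) = -u ^ 2 / 4 + √t * ε t * u := by
    rw [mul_pow, sq_sqrt ht.le]
    field_simp
  rw [weightedHeatKernel, hexponent]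

lemma aestronglyMeasurable_weightedHeatKernel {t : ℝ} {μ : Measure ℝ}
    (hψ : AEStronglyMeasurable (ψ t) μ) :
    AEStronglyMeasurable (weightedHeatKernel ε ψ t) μ := by
  have hexp : Continuous fun y => exp (-y ^ 2 / (4 * t) + ε t * y) := by fun_prop
  exact hexp.aestronglyMeasurable.mul hψ

lemma abs_weightedHeatKernel_sqrt_mul_le {t u : ℝ} (ht : 0 < t) (hu : 0 ≤ u)
    (hε : √t * ε t ≤ 1) (hψ : |ψ t (√t * u)| ≤ K) :
    |weightedHeatKernel ε ψ t (√t * u)| ≤ exp 2 * K * exp (-(1 / 8) * u ^ 2) := by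
  rw [weightedHeatKernel_sqrt_mul ε ψ ht, abs_mul, abs_exp]
  calc exp (-u ^ 2 / 4 + √t * ε t * u) * |ψ t (√t * u)|
      ≤ exp 2 * exp (-(1 / 8) * u ^ 2) * K :=
        mul_le_mul (exp_neg_sq_div_four_add_mul_le hε hu) hψ (abs_nonneg _) (by positivity)
    _ = exp 2 * K * exp (-(1 / 8) * u ^ 2) := by ring

lemma tendsto_weightedHeatKernel_sqrt_mul {u : ℝ}
    (hε : Tendsto (fun t => √t * ε t) atTop (nhds 0))
    (hψ : Tendsto (fun t => ψ t (√t * u)) atTop (nhds L)) :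
    Tendsto (fun t => weightedHeatKernel ε ψ t (√t * u)) atTop
      (nhds (exp (-u ^ 2 / 4) * L)) := by
  have hexponent := (hε.mul_const u).const_add (-u ^ 2 / 4)
  rw [zero_mul, add_zero] at hexponent
  refine (hexponent.rexp.mul hψ).congr' ?_
  filter_upwards [eventually_gt_atTop 0] with t ht
  exact (weightedHeatKernel_sqrt_mul ε ψ ht u).symm

end WeightedHeatKernel

lemma tendsto_div_const_mul_nhds_one_iff {α 𝕜 : Type*} [Field 𝕜] [TopologicalSpace 𝕜]
    [ContinuousMul 𝕜] {l : Filter α} {f g : α → 𝕜} {c : 𝕜} (hc : c ≠ 0) :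
    Tendsto (fun x => f x / (c * g x)) l (nhds 1) ↔ Tendsto (fun x => f x / g x) l (nhds c) := by
  have hscale : Tendsto (fun x => c * (f x / (c * g x))) l (nhds (c * 1)) ↔
      Tendsto (fun x => f x / (c * g x)) l (nhds 1) :=
    tendsto_const_smul_iff₀ hc
  simp only [← hscale, mul_one, mul_div_assoc', mul_div_mul_left _ _ hc]

lemma locallyIntegrable_of_forall_norm_le {X E : Type*} [MeasurableSpace X] [TopologicalSpace X]
    [NormedAddCommGroup E] {μ : Measure X} [IsLocallyFiniteMeasure μ] {f : X → E} {C : ℝ}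
    (hf : AEStronglyMeasurable f μ) (hC : ∀ x, ‖f x‖ ≤ C) : LocallyIntegrable f μ :=
  (locallyIntegrable_const C).mono hf
    (Eventually.of_forall fun x => (hC x).trans (le_abs_self C))

theorem stmt10_general {K L A β : ℝ} (hβ : -1 < β) {ψ : ℝ → ℝ → ℝ} {φ ε : ℝ → ℝ}
    (hψmeas : ∀ᶠ t in atTop, AEStronglyMeasurable (ψ t) (volume.restrict (Ioi 0)))
    (hψbdd : ∀ᶠ t in atTop, ∀ y > 0, |ψ t y| ≤ K)
    (hψlim : ∀ u > 0, Tendsto (fun t => ψ t (√t * u)) atTop (nhds L))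
    (hφ : LocallyIntegrableOn φ (Ici 0))
    (hφlim : Tendsto (fun y => φ y / y ^ β) atTop (nhds A))
    (hε : Tendsto (fun t => √t * ε t) atTop (nhds 0)) :
    Tendsto (fun t =>
        (∫ y in Ioi 0, φ y * exp (-y ^ 2 / (4 * t) + ε t * y) * ψ t y) / t ^ ((1 + β) / 2))
      atTop (nhds (A * 2 ^ β * L * Gamma ((1 + β) / 2))) := by
  have hK : 0 ≤ K :=
    let ⟨_, hψt⟩ := hψbdd.exists
    (abs_nonneg _).trans (hψt 1 one_pos)
  have hkW : ∀ᶠ t in atTop, ∀ u > 0,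
      |weightedHeatKernel ε ψ t (√t * u)| ≤ exp 2 * K * exp (-(1 / 8) * u ^ 2) := by
    filter_upwards [hψbdd, hε.eventually_le_const one_pos, eventually_gt_atTop 0]
      with t hψt hεt ht u hu
    exact abs_weightedHeatKernel_sqrt_mul_le ht hu.le hεt (hψt _ (by positivity))
  have hWint : IntegrableOn (fun u => u ^ β * (exp 2 * K * exp (-(1 / 8) * u ^ 2))) (Ioi 0) := by
    simp only [mul_left_comm (_ ^ β)]
    exact (integrableOn_rpow_mul_exp_neg_mul_sq (by norm_num) hβ).const_mul (exp 2 * K)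
  have hWB : ∀ u > (0 : ℝ), exp 2 * K * exp (-(1 / 8) * u ^ 2) ≤ exp 2 * K := fun u _ =>
    mul_le_of_le_one_right (by positivity) (exp_le_one_iff.2 (by linarith [sq_nonneg u]))
  have hscaling := tendsto_integral_mul_div_rpow_of_locallyIntegrableOn hβ tendsto_sqrt_atTop
    hφ hφlim (hψmeas.mono fun _ => aestronglyMeasurable_weightedHeatKernel) hkW
    (fun u hu => tendsto_weightedHeatKernel_sqrt_mul hε (hψlim u hu)) hWint hWB
  have hvalue : A * ∫ u in Ioi 0, u ^ β * (exp (-u ^ 2 / 4) * L) =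
      A * 2 ^ β * L * Gamma ((1 + β) / 2) := by
    simp only [← mul_assoc, integral_mul_const, integral_rpow_mul_exp_neg_sq_div_four hβ]
    ring
  rw [hvalue] at hscaling
  refine hscaling.congr' ?_
  filter_upwards [eventually_ge_atTop 0] with t ht
  simp only [weightedHeatKernel, ← mul_assoc, sqrt_eq_rpow, ← rpow_mul ht, one_div_mul_eq_div]

theorem stmt10 (K₁ K₂ Δ : ℝ) (hK₁ : 0 < K₁) (hK : K₁ ≤ K₂)
    (ψ : ℝ → ℝ → ℝ)
    (hψmeas : ∀ t > 0, Measurable (ψ t))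
    (hψbdd : ∀ t > 0, ∀ y ≥ 0, ψ t y ∈ Set.Icc K₁ K₂)
    (hψlim : ∀ y : ℝ → ℝ, Tendsto y atTop atTop →
      Tendsto (fun t => ψ t (y t)) atTop (nhds (Real.exp Δ)))
    (A β : ℝ) (hA : 0 < A) (hβ : -1 < β)
    (φ : ℝ → ℝ) (hφmeas : Measurable φ) (hφbdd : ∃ C, ∀ y, |φ y| ≤ C)
    (hφasym : Tendsto (fun y => φ y / (A * y ^ β)) atTop (nhds 1))
    (ε : ℝ → ℝ) (hε : Tendsto (fun t => Real.sqrt t * ε t) atTop (nhds 0)) :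
    Tendsto (fun t =>
        (∫ y in Set.Ioi (0:ℝ), φ y * Real.exp (-y^2/(4*t) + ε t * y) * ψ t y) /
        (A * 2 ^ β * Real.exp Δ * Real.Gamma ((1 + β)/2) * t ^ ((1 + β)/2)))
      atTop (nhds 1) := by
  obtain ⟨C, hC⟩ := hφbdd
  have hΓ : 0 < Gamma ((1 + β) / 2) := Gamma_pos_of_pos (by linarith)
  exact (tendsto_div_const_mul_nhds_one_iff (by positivity)).2 <| stmt10_general hβ
    ((eventually_gt_atTop 0).mono fun t ht => (hψmeas t ht).aestronglyMeasurable)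
    ((eventually_gt_atTop 0).mono fun t ht y hy =>
      abs_le_max_abs_abs (hψbdd t ht y hy.le).1 (hψbdd t ht y hy.le).2)
    (fun u hu => hψlim _ (tendsto_sqrt_atTop.atTop_mul_const hu))
    ((locallyIntegrable_of_forall_norm_le hφmeas.aestronglyMeasurable hC).locallyIntegrableOn _)
    ((tendsto_div_const_mul_nhds_one_iff hA.ne').1 hφasym) hε
end

section
/- Let K₂ ≥ K₁ > 0 and Δ ∈ ℝ. For each t > 0 let ψ_t : [0,∞) → [K₁, K₂] be measurable, and assume that for every function t ↦ y_t with y_t → ∞ as t → ∞ one has ψ_t(y_t) → e^Δ as t → ∞. Let A > 0 and let φ : [0,∞) → ℝ be bounded and measurable with φ(y) ~ A y^{−1} as y → ∞. Let ε : (0,∞) → ℝ satisfy √t · ε_t → 0 as t → ∞. Then, as t → ∞, ∫₀^∞ φ(y) e^{−y²/(4t) + ε_t y} ψ_t(y) dy ~ (A/2) e^Δ log t. -/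
open MeasureTheory Filter Real Set Asymptotics

/-! On the logarithmic scale `y = t ^ s`, the integral of a function `F t` over `y > 0` equals
`log t` times `∫ t ^ s • F t (t ^ s) ds`. For the `F t` at hand, the new integrand is
exponentially small both for `s < 0`, where `F t` is bounded, and for `s > 1 / 2`, where
`y ≫ √t` and the Gaussian factor dominates; for `0 < s < 1 / 2` the Gaussian factor tends to `1`
and the integrand to `A * exp Δ`. By dominated convergence the integral is asymptotic to `log t`
times `A * exp Δ` times the length `1 / 2` of this window. -/

section LogScale

variable {E : Type*} [NormedAddCommGroup E] [NormedSpace ℝ E]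

lemma integral_Ioi_zero_eq_log_smul_integral_rpow {t : ℝ} (ht : 1 < t) (f : ℝ → E) :
    ∫ y in Ioi 0, f y = log t • ∫ s : ℝ, t ^ s • f (t ^ s) := by
  have ht₀ : 0 < t := zero_lt_one.trans ht
  have himage : (t ^ · : ℝ → ℝ) '' univ = Ioi 0 := by
    ext y
    refine ⟨?_, fun hy => ⟨logb t y, mem_univ _, rpow_logb ht₀ ht.ne' hy⟩⟩
    rintro ⟨s, -, rfl⟩
    exact rpow_pos_of_pos ht₀ s
  have hderiv : ∀ s ∈ univ, HasDerivWithinAt (t ^ · : ℝ → ℝ) (t ^ s * log t) univ s :=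
    fun s _ => (hasStrictDerivAt_const_rpow ht₀ s).hasDerivAt.hasDerivWithinAt
  have hinj : InjOn (t ^ · : ℝ → ℝ) univ := (strictMono_rpow_of_base_gt_one ht).injective.injOn
  rw [← himage, integral_image_eq_integral_abs_deriv_smul .univ hderiv hinj, setIntegral_univ,
    ← integral_smul]
  congr with s
  rw [abs_of_pos (mul_pos (rpow_pos_of_pos ht₀ s) (log_pos ht)), mul_comm, mul_smul]

lemma integrable_exp_neg_abs : Integrable fun s : ℝ => exp (-|s|) := by
  refine .of_integral_ne_zero ?_
  rw [integral_comp_abs (f := fun s => exp (-s)), integral_exp_neg_Ioi_zero]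
  norm_num

lemma min_rpow_le_exp_mul_exp_neg_abs {a t : ℝ} (ha : 0 ≤ a) (ht : exp 1 ≤ t) (s : ℝ) :
    min 1 (min (t ^ s) (t ^ a / t ^ s)) ≤ exp a * exp (-|s|) := by
  have ht₀ : 0 < t := (exp_pos 1).trans_le ht
  have hrpow : ∀ r ≤ 0, t ^ r ≤ exp r := fun r hr => by
    simpa [← exp_mul] using rpow_le_rpow_of_nonpos (exp_pos 1) ht hr
  rw [← rpow_sub ht₀, ← exp_add]
  rcases le_total s 0 with hs | hs
  · calc min 1 (min (t ^ s) (t ^ (a - s))) ≤ t ^ s := by simp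
      _ ≤ exp s := hrpow s hs
      _ ≤ exp (a + -|s|) := by
        rw [abs_of_nonpos hs]
        gcongr
        linarith
  rw [abs_of_nonneg hs, ← sub_eq_add_neg]
  rcases le_total s a with hsa | hsa
  · calc min 1 (min (t ^ s) (t ^ (a - s))) ≤ 1 := min_le_left _ _
      _ ≤ exp (a - s) := one_le_exp (sub_nonneg.2 hsa)
  · calc min 1 (min (t ^ s) (t ^ (a - s))) ≤ t ^ (a - s) := by simp
      _ ≤ exp (a - s) := hrpow _ (sub_nonpos.2 hsa)

lemma tendsto_min_rpow_zero {a s : ℝ} (hs : s < 0 ∨ a < s) :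
    Tendsto (fun t : ℝ => min 1 (min (t ^ s) (t ^ a / t ^ s))) atTop (nhds 0) := by
  have hnonneg : ∀ᶠ t : ℝ in atTop, 0 ≤ min 1 (min (t ^ s) (t ^ a / t ^ s)) := by
    filter_upwards [eventually_ge_atTop 0] with t ht
    positivity
  rcases hs with hs | hs
  · have hlim : Tendsto (fun t : ℝ => t ^ s) atTop (nhds 0) := by
      simpa using tendsto_rpow_neg_atTop (neg_pos.2 hs)
    exact squeeze_zero' hnonneg (.of_forall fun t => by simp) hlim
  · have hlim : Tendsto (fun t : ℝ => t ^ (a - s)) atTop (nhds 0) := by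
      simpa using tendsto_rpow_neg_atTop (sub_pos.2 hs)
    refine squeeze_zero' hnonneg ?_ hlim
    filter_upwards [eventually_gt_atTop 0] with t ht
    simp [rpow_sub ht]

lemma ae_tendsto_indicator_Ioo_rpow_smul {F : ℝ → ℝ → E} {a M : ℝ} {ℓ : E}
    (hbdd : ∀ᶠ t in atTop, ∀ y > 0, ‖y • F t y‖ ≤ M * min 1 (min y (t ^ a / y)))
    (hlim : ∀ s ∈ Ioo 0 a, Tendsto (fun t => t ^ s • F t (t ^ s)) atTop (nhds ℓ)) :
    ∀ᵐ s : ℝ, Tendsto (fun t => t ^ s • F t (t ^ s)) atTop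
      (nhds ((Ioo 0 a).indicator (fun _ => ℓ) s)) := by
  filter_upwards [volume.ae_ne 0, volume.ae_ne a] with s hs₀ hsa
  by_cases hs : s ∈ Ioo 0 a
  · simpa [hs] using hlim s hs
  have hout : s < 0 ∨ a < s := by grind
  have hzero := (tendsto_min_rpow_zero hout).const_mul M
  rw [mul_zero] at hzero
  rw [indicator_of_notMem hs]
  refine squeeze_zero_norm' ?_ hzero
  filter_upwards [hbdd, eventually_gt_atTop 0] with t hF ht
  exact hF _ (rpow_pos_of_pos ht s)

theorem tendsto_inv_log_smul_integral_Ioi_zero [CompleteSpace E] {F : ℝ → ℝ → E} {a M : ℝ} {ℓ : E}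
    (ha : 0 ≤ a) (hM : 0 ≤ M) (hmeas : ∀ᶠ t in atTop, StronglyMeasurable (F t))
    (hbdd : ∀ᶠ t in atTop, ∀ y > 0, ‖y • F t y‖ ≤ M * min 1 (min y (t ^ a / y)))
    (hlim : ∀ s ∈ Ioo 0 a, Tendsto (fun t => t ^ s • F t (t ^ s)) atTop (nhds ℓ)) :
    Tendsto (fun t => (log t)⁻¹ • ∫ y in Ioi 0, F t y) atTop (nhds (a • ℓ)) := by
  have hmeas' : ∀ᶠ t : ℝ in atTop,
      AEStronglyMeasurable (fun s : ℝ => t ^ s • F t (t ^ s)) volume := by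
    filter_upwards [hmeas] with t hF
    have hpow : Measurable fun s : ℝ => t ^ s := by fun_prop
    exact (hpow.stronglyMeasurable.smul (hF.comp_measurable hpow)).aestronglyMeasurable
  have hdom : ∀ᶠ t : ℝ in atTop, ∀ᵐ s : ℝ,
      ‖t ^ s • F t (t ^ s)‖ ≤ M * (exp a * exp (-|s|)) := by
    filter_upwards [hbdd, eventually_ge_atTop (exp 1)] with t hF ht
    refine .of_forall fun s => (hF _ (rpow_pos_of_pos ((exp_pos 1).trans_le ht) s)).trans ?_
    gcongr
    exact min_rpow_le_exp_mul_exp_neg_abs ha ht s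
  have hDCT := tendsto_integral_filter_of_dominated_convergence _ hmeas' hdom
    ((integrable_exp_neg_abs.const_mul _).const_mul _)
    (ae_tendsto_indicator_Ioo_rpow_smul hbdd hlim)
  have hlength : ∫ s : ℝ, (Ioo 0 a).indicator (fun _ => ℓ) s = a • ℓ := by
    simp [integral_indicator, ha]
  rw [hlength] at hDCT
  refine hDCT.congr' ?_
  filter_upwards [eventually_gt_atTop 1] with t ht
  rw [integral_Ioi_zero_eq_log_smul_integral_rpow ht, inv_smul_smul₀ (log_pos ht).ne']

end LogScale

lemma neg_sq_div_add_mul_le {t : ℝ} (ht : 0 < t) (e y : ℝ) :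
    -y ^ 2 / (4 * t) + e * y ≤ (√t * e) ^ 2 := by
  have hsquare : (√t * e) ^ 2 - (-y ^ 2 / (4 * t) + e * y) = (y / (2 * √t) - √t * e) ^ 2 := by
    rw [sub_sq, div_pow, mul_pow 2, sq_sqrt ht.le]
    field_simp
    ring
  linarith [sq_nonneg (y / (2 * √t) - √t * e)]

lemma mul_exp_neg_sq_div_add_mul_le {t : ℝ} (ht : 0 < t) (e y : ℝ) :
    y * exp (-y ^ 2 / (4 * t) + e * y) ≤ √t * exp ((√t * e + 1) ^ 2) := by
  have hroot : 0 < √t := sqrt_pos.2 ht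
  -- Bounding `y` by an exponential only shifts the tilt `e` to `e + 1 / √t`.
  have hy : y ≤ √t * exp (y / √t) := by
    rw [← div_le_iff₀' hroot]
    linarith [add_one_le_exp (y / √t)]
  have hexp : y / √t + (-y ^ 2 / (4 * t) + e * y) ≤ (√t * e + 1) ^ 2 := by
    have h := neg_sq_div_add_mul_le ht (e + 1 / √t) y
    have hshift : √t * (e + 1 / √t) = √t * e + 1 := by field_simp
    rw [hshift] at h
    linarith [show (e + 1 / √t) * y = e * y + y / √t by ring]
  calc y * exp (-y ^ 2 / (4 * t) + e * y)
      ≤ √t * exp (y / √t) * exp (-y ^ 2 / (4 * t) + e * y) := by gcongr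
    _ = √t * exp (y / √t + (-y ^ 2 / (4 * t) + e * y)) := by rw [mul_assoc, ← exp_add]
    _ ≤ √t * exp ((√t * e + 1) ^ 2) := by gcongr

lemma exp_neg_sq_div_add_mul_le_mul_min {b e t y : ℝ} (ht : 0 < t) (hy : 0 < y)
    (he : |√t * e| ≤ b) :
    exp (-y ^ 2 / (4 * t) + e * y) ≤ exp ((b + 1) ^ 2) * min 1 (√t / y) := by
  obtain ⟨hlower, hupper⟩ := abs_le.1 he
  rw [mul_min_of_nonneg _ _ (exp_pos _).le, le_min_iff]
  constructor
  · rw [mul_one, exp_le_exp]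
    exact (neg_sq_div_add_mul_le ht e y).trans (sq_le_sq' (by linarith) (by linarith))
  · rw [mul_div_assoc', le_div_iff₀' hy, mul_comm (exp _)]
    refine (mul_exp_neg_sq_div_add_mul_le ht e y).trans ?_
    gcongr √t * exp ?_
    exact sq_le_sq' (by linarith) (by linarith)

lemma tendsto_neg_sq_div_add_mul_zero {ε y : ℝ → ℝ}
    (hε : (fun t => √t * ε t) =O[atTop] fun _ => (1 : ℝ))
    (hy : Tendsto (fun t => y t / √t) atTop (nhds 0)) :
    Tendsto (fun t => -y t ^ 2 / (4 * t) + ε t * y t) atTop (nhds 0) := by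
  have hmul : Tendsto (fun t => √t * ε t * (y t / √t)) atTop (nhds 0) :=
    isBoundedUnder_le_mul_tendsto_zero ((isBigO_one_iff ℝ).1 hε) hy
  have hsum := ((hy.pow 2).neg.div_const 4).add hmul
  norm_num at hsum
  refine hsum.congr' ?_
  filter_upwards [eventually_gt_atTop 0] with t ht
  rw [div_pow, sq_sqrt ht.le]
  field_simp

lemma exists_mul_abs_le_mul_min_of_isBigO_one {φ : ℝ → ℝ} {C : ℝ} (hC : ∀ y > 0, |φ y| ≤ C)
    (hφ : (fun y => y * φ y) =O[atTop] fun _ => (1 : ℝ)) :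
    ∃ B ≥ 0, ∀ y > 0, y * |φ y| ≤ B * min 1 y := by
  obtain ⟨D, hD⟩ := hφ.bound
  obtain ⟨R, hR⟩ := eventually_atTop.1 hD
  have hC₀ : 0 ≤ C := (abs_nonneg _).trans (hC 1 one_pos)
  have hB : 0 ≤ max D (max C (|R| * C)) := hC₀.trans (by simp)
  refine ⟨_, hB, fun y hy => ?_⟩
  rw [mul_min_of_nonneg _ _ hB, mul_one, le_min_iff]
  constructor
  · rcases le_total R y with hRy | hyR
    · have hlarge : y * |φ y| ≤ D := by simpa [abs_of_pos hy] using hR y hRy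
      exact hlarge.trans (le_max_left _ _)
    · have hsmall : y * |φ y| ≤ |R| * C :=
        mul_le_mul (hyR.trans (le_abs_self R)) (hC y hy) (abs_nonneg _) (abs_nonneg _)
      exact hsmall.trans (by simp)
  · rw [mul_comm]
    exact mul_le_mul_of_nonneg_right ((hC y hy).trans (by simp)) hy.le

lemma norm_smul_mul_exp_mul_le {B K b e p t v y : ℝ} (hB : 0 ≤ B) (ht : 0 < t) (hy : 0 < y)
    (he : |√t * e| ≤ b) (hp : y * |p| ≤ B * min 1 y) (hv : |v| ≤ K) :
    ‖y • (p * exp (-y ^ 2 / (4 * t) + e * y) * v)‖ ≤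
      B * exp ((b + 1) ^ 2) * K * min 1 (min y (√t / y)) := by
  have hK : 0 ≤ K := (abs_nonneg v).trans hv
  have hr : 0 ≤ √t / y := by positivity
  have hmin : min 1 y * min 1 (√t / y) ≤ min 1 (min y (√t / y)) := by
    refine le_min ?_ (le_min ?_ ?_)
    · exact mul_le_one₀ (min_le_left _ _) (le_min zero_le_one hr) (min_le_left _ _)
    · exact (mul_le_of_le_one_right (by positivity) (min_le_left _ _)).trans (min_le_right _ _)
    · exact (mul_le_of_le_one_left (by positivity) (min_le_left _ _)).trans (min_le_right _ _)
  calc ‖y • (p * exp (-y ^ 2 / (4 * t) + e * y) * v)‖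
      = y * |p| * exp (-y ^ 2 / (4 * t) + e * y) * |v| := by
        simp only [smul_eq_mul, norm_mul, norm_eq_abs, abs_exp, abs_of_pos hy, mul_assoc]
    _ ≤ B * min 1 y * (exp ((b + 1) ^ 2) * min 1 (√t / y)) * K := by
        gcongr
        exact exp_neg_sq_div_add_mul_le_mul_min ht hy he
    _ = B * exp ((b + 1) ^ 2) * K * (min 1 y * min 1 (√t / y)) := by ring
    _ ≤ B * exp ((b + 1) ^ 2) * K * min 1 (min y (√t / y)) := by gcongr

lemma tendsto_rpow_smul_mul_exp_mul {A c s : ℝ} {ψ : ℝ → ℝ → ℝ} {φ ε : ℝ → ℝ}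
    (hs : s ∈ Ioo (0 : ℝ) (1 / 2)) (hψ : Tendsto (fun t => ψ t (t ^ s)) atTop (nhds c))
    (hφ : Tendsto (fun y => y * φ y) atTop (nhds A))
    (hε : (fun t => √t * ε t) =O[atTop] fun _ => (1 : ℝ)) :
    Tendsto (fun t => t ^ s •
      (φ (t ^ s) * exp (-(t ^ s) ^ 2 / (4 * t) + ε t * t ^ s) * ψ t (t ^ s)))
      atTop (nhds (A * c)) := by
  have hratio : Tendsto (fun t : ℝ => t ^ s / √t) atTop (nhds 0) := by
    refine (tendsto_rpow_neg_atTop (sub_pos.2 hs.2)).congr' ?_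
    filter_upwards [eventually_gt_atTop 0] with t ht
    rw [neg_sub, rpow_sub ht, sqrt_eq_rpow]
  have hexp := (tendsto_neg_sq_div_add_mul_zero hε hratio).rexp
  simpa [Function.comp_def, mul_assoc] using
    ((hφ.comp (tendsto_rpow_atTop hs.1)).mul hexp).mul hψ

lemma tendsto_div_const_mul_one_iff {α : Type*} {l : Filter α} {u v : α → ℝ} {c : ℝ} (hc : c ≠ 0) :
    Tendsto (fun x => u x / (c * v x)) l (nhds 1) ↔ Tendsto (fun x => u x / v x) l (nhds c) := by
  constructor <;> intro h
  · simpa [mul_div_mul_left _ _ hc, mul_div_assoc'] using h.const_mul c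
  · simpa [hc, div_div, mul_comm] using h.div_const c

theorem stmt11_general {C K A c : ℝ} {ψ : ℝ → ℝ → ℝ} {φ ε : ℝ → ℝ}
    (hψmeas : ∀ᶠ t in atTop, Measurable (ψ t))
    (hψbdd : ∀ᶠ t in atTop, ∀ y > 0, |ψ t y| ≤ K)
    (hψlim : ∀ s ∈ Ioo (0 : ℝ) (1 / 2), Tendsto (fun t => ψ t (t ^ s)) atTop (nhds c))
    (hφmeas : Measurable φ) (hφbdd : ∀ y > 0, |φ y| ≤ C)
    (hφlim : Tendsto (fun y => y * φ y) atTop (nhds A))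
    (hε : (fun t => √t * ε t) =O[atTop] fun _ => (1 : ℝ)) :
    Tendsto (fun t => (∫ y in Ioi (0 : ℝ), φ y * exp (-y ^ 2 / (4 * t) + ε t * y) * ψ t y) / log t)
      atTop (nhds (A / 2 * c)) := by
  obtain ⟨B, hB, hφB⟩ := exists_mul_abs_le_mul_min_of_isBigO_one hφbdd (hφlim.isBigO_one ℝ)
  obtain ⟨b, hb⟩ := hε.bound
  obtain ⟨t₀, ht₀⟩ := hψbdd.exists
  have hK : 0 ≤ K := (abs_nonneg _).trans (ht₀ 1 one_pos)
  have hmeas : ∀ᶠ t in atTop, StronglyMeasurable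
      fun y => φ y * exp (-y ^ 2 / (4 * t) + ε t * y) * ψ t y := by
    filter_upwards [hψmeas] with t hψ
    exact Measurable.stronglyMeasurable (by fun_prop)
  have hbdd : ∀ᶠ t in atTop, ∀ y > 0, ‖y • (φ y * exp (-y ^ 2 / (4 * t) + ε t * y) * ψ t y)‖ ≤
      B * exp ((b + 1) ^ 2) * K * min 1 (min y (t ^ (1 / 2 : ℝ) / y)) := by
    filter_upwards [hb, hψbdd, eventually_gt_atTop 0] with t hεt hψt ht y hy
    rw [← sqrt_eq_rpow]
    exact norm_smul_mul_exp_mul_le hB ht hy (by simpa using hεt) (hφB y hy) (hψt y hy)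
  simpa [div_eq_inv_mul, mul_assoc] using
    tendsto_inv_log_smul_integral_Ioi_zero (by norm_num) (by positivity) hmeas hbdd
      fun s hs => tendsto_rpow_smul_mul_exp_mul hs (hψlim s hs) hφlim hε

theorem stmt11 (K₁ K₂ Δ : ℝ) (hK₁ : 0 < K₁) (hK : K₁ ≤ K₂)
    (ψ : ℝ → ℝ → ℝ)
    (hψmeas : ∀ t > 0, Measurable (ψ t))
    (hψbdd : ∀ t > 0, ∀ y ≥ 0, ψ t y ∈ Set.Icc K₁ K₂)
    (hψlim : ∀ y : ℝ → ℝ, Tendsto y atTop atTop →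
      Tendsto (fun t => ψ t (y t)) atTop (nhds (Real.exp Δ)))
    (A : ℝ) (hA : 0 < A)
    (φ : ℝ → ℝ) (hφmeas : Measurable φ) (hφbdd : ∃ C, ∀ y, |φ y| ≤ C)
    (hφasym : Tendsto (fun y => φ y / (A * y ^ (-1 : ℝ))) atTop (nhds 1))
    (ε : ℝ → ℝ) (hε : Tendsto (fun t => Real.sqrt t * ε t) atTop (nhds 0)) :
    Tendsto (fun t =>
        (∫ y in Set.Ioi (0:ℝ), φ y * Real.exp (-y^2/(4*t) + ε t * y) * ψ t y) /
        ((A/2) * Real.exp Δ * Real.log t))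
      atTop (nhds 1) := by
  obtain ⟨C, hC⟩ := hφbdd
  have hφlim : Tendsto (fun y => y * φ y) atTop (nhds A) := by
    simpa [rpow_neg_one, mul_comm] using (tendsto_div_const_mul_one_iff hA.ne').1 hφasym
  exact (tendsto_div_const_mul_one_iff (by positivity)).2 <|
    stmt11_general ((eventually_gt_atTop 0).mono hψmeas)
      ((eventually_gt_atTop 0).mono fun t ht y hy =>
        abs_le_max_abs_abs (hψbdd t ht y hy.le).1 (hψbdd t ht y hy.le).2)
      (fun s hs => hψlim _ (tendsto_rpow_atTop hs.1)) hφmeas (fun y _ => hC y) hφlim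
      (hε.isBigO_one ℝ)
end

section
/- Let (Ω, F, P) be a probability space. Let c₁, c₂ > 0, let G and, for each t > 0, G_t be nonnegative random variables satisfying P(G > z) ≤ c₁ e^{−c₂ z²} and P(G_t > z) ≤ c₁ e^{−c₂ z²} for all z ≥ 0 and all t. Let α, β > 0, let ε : (0,∞) → [0,∞) with ε_t → 0 as t → ∞, and for each t let A_t, B_t be random variables with |A_t| ≤ α G and |B_t| ≤ β ε_t G_t almost surely. Then for every integer n ≥ 0, the random variables e^{A_t + B_t} and e^{A_t} B_t^p (0 ≤ p ≤ n) are integrable for every t, and there exist C > 0 and t₀ > 0 such that for all t ≥ t₀: | E[e^{A_t + B_t}] − Σ_{p=0}^{n} (1/p!) E[e^{A_t} B_t^p] | ≤ C ε_t^{n+1}. -/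
open MeasureTheory Filter Real

/-!
Write `exp (A + B)` as `exp A * exp B` and expand the second factor. The Taylor remainder of order
`n` is at most `|B| ^ n * exp |B|`, and if `|B| ≤ s * Y` with `Y ≥ 0`, then absorbing `Y ^ n` into
`n! * exp Y` bounds it by `n! * s ^ n * exp ((s + 1) * Y)`. The power of the small parameter is
thereby split off, and what remains is an exponential moment of `A` and `Y`. Cauchy-Schwarz (in the
form of AM-GM) decouples it, and the layer cake formula with the Gaussian tail bounds each term
by an explicit constant that is the same for all random variables with these tails.
-/

section ExpTaylor

theorem abs_exp_sub_sum_le_abs_pow_mul_exp_abs (b : ℝ) (n : ℕ) :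
    |exp b - ∑ p ∈ Finset.range n, b ^ p / p.factorial| ≤ |b| ^ n * exp |b| := by
  have h := Complex.norm_exp_sub_sum_le_norm_mul_exp (b : ℂ) n
  rw [Complex.norm_real, norm_eq_abs] at h
  rw [← norm_eq_abs, ← Complex.norm_real]
  exact_mod_cast h

theorem abs_pow_mul_exp_abs_le {b s y l : ℝ} (hs : 0 ≤ s) (hy : 0 ≤ y) (hb : |b| ≤ s * y)
    (hl : s + 1 ≤ l) (n : ℕ) :
    |b| ^ n * exp |b| ≤ n.factorial * s ^ n * exp (l * y) := by
  have hpow : y ^ n ≤ n.factorial * exp y := by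
    rw [← div_le_iff₀' (by positivity)]
    exact pow_div_factorial_le_exp y hy n
  calc |b| ^ n * exp |b|
      ≤ (s * y) ^ n * exp (s * y) := by gcongr
    _ = s ^ n * y ^ n * exp (s * y) := by rw [mul_pow]
    _ ≤ s ^ n * (n.factorial * exp y) * exp (s * y) := by gcongr
    _ = n.factorial * s ^ n * exp ((s + 1) * y) := by
        rw [add_mul, one_mul, exp_add]; ring
    _ ≤ n.factorial * s ^ n * exp (l * y) := by gcongr

variable {Ω : Type*} {mΩ : MeasurableSpace Ω} {μ : Measure Ω} {w b Y : Ω → ℝ} {s l : ℝ}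

theorem integrable_mul_of_abs_le_const_mul {f g : Ω → ℝ} {c : ℝ}
    (hw : AEStronglyMeasurable w μ) (hf : AEStronglyMeasurable f μ)
    (hwg : Integrable (fun ω => w ω * g ω) μ) (hfg : ∀ᵐ ω ∂μ, |f ω| ≤ c * g ω) :
    Integrable (fun ω => w ω * f ω) μ := by
  refine (hwg.const_mul c).mono (hw.mul hf) ?_
  filter_upwards [hfg] with ω hω
  calc ‖w ω * f ω‖ = |w ω| * |f ω| := by rw [norm_eq_abs, abs_mul]
    _ ≤ |w ω| * |c * g ω| :=
        mul_le_mul_of_nonneg_left (hω.trans (le_abs_self _)) (abs_nonneg _)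
    _ = ‖c * (w ω * g ω)‖ := by rw [norm_eq_abs, ← abs_mul, mul_left_comm]

theorem integrable_mul_pow_of_abs_le_mul (hw : AEStronglyMeasurable w μ)
    (hb : AEStronglyMeasurable b μ) (hs : 0 ≤ s) (hY : 0 ≤ᵐ[μ] Y)
    (hbY : ∀ᵐ ω ∂μ, |b ω| ≤ s * Y ω) (hl : s + 1 ≤ l)
    (hwY : Integrable (fun ω => w ω * exp (l * Y ω)) μ) (p : ℕ) :
    Integrable (fun ω => w ω * b ω ^ p) μ := by
  refine integrable_mul_of_abs_le_const_mul (c := p.factorial * s ^ p) hw (hb.pow p) hwY ?_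
  filter_upwards [hY, hbY] with ω hYω hbω
  calc |b ω ^ p| = |b ω| ^ p := abs_pow _ _
    _ ≤ |b ω| ^ p * exp |b ω| :=
        le_mul_of_one_le_right (by positivity) (one_le_exp (abs_nonneg _))
    _ ≤ p.factorial * s ^ p * exp (l * Y ω) := abs_pow_mul_exp_abs_le hs hYω hbω hl p

theorem integrable_mul_exp_of_abs_le_mul (hw : AEStronglyMeasurable w μ)
    (hb : AEStronglyMeasurable b μ) (hs : 0 ≤ s) (hY : 0 ≤ᵐ[μ] Y)
    (hbY : ∀ᵐ ω ∂μ, |b ω| ≤ s * Y ω) (hl : s + 1 ≤ l)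
    (hwY : Integrable (fun ω => w ω * exp (l * Y ω)) μ) :
    Integrable (fun ω => w ω * exp (b ω)) μ := by
  refine integrable_mul_of_abs_le_const_mul (c := 1) hw
    (continuous_exp.comp_aestronglyMeasurable hb) hwY ?_
  filter_upwards [hY, hbY] with ω hYω hbω
  calc |exp (b ω)| = exp (b ω) := abs_exp _
    _ ≤ exp |b ω| := exp_le_exp.2 (le_abs_self _)
    _ ≤ 1 * exp (l * Y ω) := by simpa using abs_pow_mul_exp_abs_le hs hYω hbω hl 0

theorem abs_integral_mul_exp_sub_sum_le (hw : AEStronglyMeasurable w μ)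
    (hb : AEStronglyMeasurable b μ) (hs : 0 ≤ s) (hY : 0 ≤ᵐ[μ] Y)
    (hbY : ∀ᵐ ω ∂μ, |b ω| ≤ s * Y ω) (hl : s + 1 ≤ l)
    (hwY : Integrable (fun ω => w ω * exp (l * Y ω)) μ) (n : ℕ) :
    |(∫ ω, w ω * exp (b ω) ∂μ) -
        ∑ p ∈ Finset.range n, (1 / (p.factorial : ℝ)) * ∫ ω, w ω * b ω ^ p ∂μ| ≤
      n.factorial * s ^ n * ∫ ω, |w ω| * exp (l * Y ω) ∂μ := by
  have hpow (p : ℕ) : Integrable (fun ω => (1 / (p.factorial : ℝ)) * (w ω * b ω ^ p)) μ :=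
    (integrable_mul_pow_of_abs_le_mul hw hb hs hY hbY hl hwY p).const_mul _
  have hremainder :
      (∫ ω, w ω * exp (b ω) ∂μ) -
          ∑ p ∈ Finset.range n, (1 / (p.factorial : ℝ)) * ∫ ω, w ω * b ω ^ p ∂μ =
        ∫ ω, w ω * (exp (b ω) - ∑ p ∈ Finset.range n, b ω ^ p / p.factorial) ∂μ := by
    simp_rw [← integral_const_mul]
    rw [← integral_finsetSum _ fun p _ => hpow p,
      ← integral_sub (integrable_mul_exp_of_abs_le_mul hw hb hs hY hbY hl hwY)
        (integrable_finsetSum _ fun p _ => hpow p)]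
    refine integral_congr_ae (ae_of_all _ fun ω => ?_)
    simp only [mul_sub, Finset.mul_sum]
    congr! 2
    ring
  have hwY_abs : Integrable (fun ω => |w ω| * exp (l * Y ω)) μ := by
    simpa only [norm_eq_abs, abs_mul, abs_exp] using hwY.norm
  rw [hremainder, ← integral_const_mul, ← norm_eq_abs]
  refine norm_integral_le_of_norm_le (hwY_abs.const_mul _) ?_
  filter_upwards [hY, hbY] with ω hYω hbω
  rw [norm_eq_abs, abs_mul, mul_left_comm]
  gcongr
  exact (abs_exp_sub_sum_le_abs_pow_mul_exp_abs (b ω) n).trans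
    (abs_pow_mul_exp_abs_le hs hYω hbω hl n)

end ExpTaylor

section GaussianTails

theorem exp_mul_exp_le_of_le_mul {a x y α l : ℝ} (ha : a ≤ α * x) :
    exp a * exp (l * y) ≤ (exp (2 * α * x) + exp (2 * l * y)) / 2 := by
  have hamgm := two_mul_le_add_sq (exp (α * x)) (exp (l * y))
  simp only [← exp_nat_mul, Nat.cast_ofNat, ← mul_assoc] at hamgm
  calc exp a * exp (l * y) ≤ exp (α * x) * exp (l * y) := by gcongr
    _ ≤ (exp (2 * α * x) + exp (2 * l * y)) / 2 := by linarith

variable {Ω : Type*} {mΩ : MeasurableSpace Ω} {μ : Measure Ω} {X Y : Ω → ℝ} {c₁ c₂ l : ℝ}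

/-- `X` is a nonnegative random variable with Gaussian tails `μ (X > z) ≤ c₁ * exp (-c₂ * z ^ 2)`.
Measurability and nonnegativity are only required almost everywhere. -/
structure HasGaussianTails (X : Ω → ℝ) (c₁ c₂ : ℝ) (μ : Measure Ω) : Prop where
  aemeasurable : AEMeasurable X μ
  nonneg : 0 ≤ᵐ[μ] X
  measure_lt_le : ∀ z ≥ 0, μ {ω | z < X ω} ≤ ENNReal.ofReal (c₁ * exp (-c₂ * z ^ 2))

/-- An upper bound for the moment generating function at `l ≥ 0` of a random variable with Gaussian
tails, equal to `1 + ∫ z, c₁ * exp (-c₂ * z ^ 2) * (l * exp (l * z))` over the whole real line. -/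
noncomputable def gaussianTailsMGFBound (c₁ c₂ l : ℝ) : ℝ :=
  1 + c₁ * l * (√(π / c₂) * exp (l ^ 2 / (4 * c₂)))

theorem gaussianTailsMGFBound_pos (hc₁ : 0 ≤ c₁) (hl : 0 ≤ l) :
    0 < gaussianTailsMGFBound c₁ c₂ l := by
  unfold gaussianTailsMGFBound
  positivity

theorem lintegral_exp_mul_eq_measure_univ_add (hX : AEMeasurable X μ) (hX₀ : 0 ≤ᵐ[μ] X)
    (hl : 0 ≤ l) :
    ∫⁻ ω, ENNReal.ofReal (exp (l * X ω)) ∂μ =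
      μ Set.univ +
        ∫⁻ z in Set.Ioi 0, μ {ω | z < X ω} * ENNReal.ofReal (l * exp (l * z)) := by
  have hprimitive (x : ℝ) : ∫ z in (0 : ℝ)..x, l * exp (l * z) = exp (l * x) - 1 := by
    rw [intervalIntegral.integral_const_mul, intervalIntegral.mul_integral_comp_mul_left,
      integral_exp, mul_zero, exp_zero]
  rw [← lintegral_comp_eq_lintegral_meas_lt_mul μ hX₀ hX
      (fun t _ => (by fun_prop : Continuous fun z => l * exp (l * z)).intervalIntegrable 0 t)
      (ae_of_all _ fun z => by positivity),
    ← lintegral_one, ← lintegral_add_left measurable_const]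
  refine lintegral_congr_ae ?_
  filter_upwards [hX₀] with ω hω
  have hone : 1 ≤ exp (l * X ω) := one_le_exp (mul_nonneg hl hω)
  rw [hprimitive, ← ENNReal.ofReal_one, ← ENNReal.ofReal_add zero_le_one (sub_nonneg.2 hone),
    add_sub_cancel]

theorem lintegral_exp_neg_mul_sq_add_mul {b : ℝ} (hb : 0 < b) (l : ℝ) :
    ∫⁻ z, ENNReal.ofReal (exp (-b * z ^ 2 + l * z)) =
      ENNReal.ofReal (√(π / b) * exp (l ^ 2 / (4 * b))) := by
  have hsquare (z : ℝ) : exp (-b * z ^ 2 + l * z) =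
      exp (-b * (z - l / (2 * b)) ^ 2) * exp (l ^ 2 / (4 * b)) := by
    rw [← exp_add]
    congr 1
    field_simp
    ring
  simp_rw [hsquare]
  rw [← ofReal_integral_eq_lintegral_ofReal
      (((integrable_exp_neg_mul_sq hb).comp_sub_right _).mul_const _)
      (ae_of_all _ fun z => by positivity),
    integral_mul_const, integral_sub_right_eq_self (fun z => exp (-b * z ^ 2)),
    integral_gaussian]

namespace HasGaussianTails

theorem lintegral_exp_mul_le [IsProbabilityMeasure μ] (hX : HasGaussianTails X c₁ c₂ μ)
    (hc₁ : 0 ≤ c₁) (hc₂ : 0 < c₂) (hl : 0 ≤ l) :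
    ∫⁻ ω, ENNReal.ofReal (exp (l * X ω)) ∂μ ≤ ENNReal.ofReal (gaussianTailsMGFBound c₁ c₂ l) := by
  have hdensity (z : ℝ) (hz : z ∈ Set.Ioi 0) :
      μ {ω | z < X ω} * ENNReal.ofReal (l * exp (l * z)) ≤
        ENNReal.ofReal (c₁ * l) * ENNReal.ofReal (exp (-c₂ * z ^ 2 + l * z)) := by
    calc μ {ω | z < X ω} * ENNReal.ofReal (l * exp (l * z))
        ≤ ENNReal.ofReal (c₁ * exp (-c₂ * z ^ 2)) * ENNReal.ofReal (l * exp (l * z)) := by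
          gcongr
          exact hX.measure_lt_le z (le_of_lt hz)
      _ = ENNReal.ofReal (c₁ * l) * ENNReal.ofReal (exp (-c₂ * z ^ 2 + l * z)) := by
          rw [← ENNReal.ofReal_mul (by positivity), ← ENNReal.ofReal_mul (by positivity), exp_add,
            mul_mul_mul_comm]
  calc ∫⁻ ω, ENNReal.ofReal (exp (l * X ω)) ∂μ
      = 1 + ∫⁻ z in Set.Ioi 0, μ {ω | z < X ω} * ENNReal.ofReal (l * exp (l * z)) := by
        rw [lintegral_exp_mul_eq_measure_univ_add hX.aemeasurable hX.nonneg hl, measure_univ]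
    _ ≤ 1 + ∫⁻ z in Set.Ioi 0,
          ENNReal.ofReal (c₁ * l) * ENNReal.ofReal (exp (-c₂ * z ^ 2 + l * z)) := by
        gcongr 1 + ?_
        exact setLIntegral_mono' measurableSet_Ioi hdensity
    _ ≤ 1 + ∫⁻ z, ENNReal.ofReal (c₁ * l) * ENNReal.ofReal (exp (-c₂ * z ^ 2 + l * z)) := by
        gcongr
        exact Measure.restrict_le_self
    _ = ENNReal.ofReal (gaussianTailsMGFBound c₁ c₂ l) := by
        rw [lintegral_const_mul' _ _ ENNReal.ofReal_ne_top, lintegral_exp_neg_mul_sq_add_mul hc₂,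
          ← ENNReal.ofReal_mul (by positivity), ← ENNReal.ofReal_one,
          ← ENNReal.ofReal_add zero_le_one (by positivity), gaussianTailsMGFBound]

variable [IsProbabilityMeasure μ]

theorem integrable_exp_mul (hX : HasGaussianTails X c₁ c₂ μ) (hc₁ : 0 ≤ c₁) (hc₂ : 0 < c₂)
    (hl : 0 ≤ l) : Integrable (fun ω => exp (l * X ω)) μ :=
  (lintegral_ofReal_ne_top_iff_integrable
    (hX.aemeasurable.const_mul l).exp.aestronglyMeasurable
    (ae_of_all _ fun _ => (exp_pos _).le)).1
    ((hX.lintegral_exp_mul_le hc₁ hc₂ hl).trans_lt ENNReal.ofReal_lt_top).ne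

theorem mgf_le (hX : HasGaussianTails X c₁ c₂ μ) (hc₁ : 0 ≤ c₁) (hc₂ : 0 < c₂) (hl : 0 ≤ l) :
    ProbabilityTheory.mgf X μ l ≤ gaussianTailsMGFBound c₁ c₂ l := by
  rw [ProbabilityTheory.mgf, ← ENNReal.ofReal_le_ofReal_iff (gaussianTailsMGFBound_pos hc₁ hl).le,
    ofReal_integral_eq_lintegral_ofReal (hX.integrable_exp_mul hc₁ hc₂ hl)
      (ae_of_all _ fun _ => (exp_pos _).le)]
  exact hX.lintegral_exp_mul_le hc₁ hc₂ hl

variable {a : Ω → ℝ} {α : ℝ}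

theorem integrable_exp_mul_exp (hX : HasGaussianTails X c₁ c₂ μ)
    (hY : HasGaussianTails Y c₁ c₂ μ) (hc₁ : 0 ≤ c₁) (hc₂ : 0 < c₂) (hα : 0 ≤ α) (hl : 0 ≤ l)
    (ha : AEMeasurable a μ) (haX : ∀ᵐ ω ∂μ, a ω ≤ α * X ω) :
    Integrable (fun ω => exp (a ω) * exp (l * Y ω)) μ := by
  refine (((hX.integrable_exp_mul hc₁ hc₂ (l := 2 * α) (by positivity)).add
    (hY.integrable_exp_mul hc₁ hc₂ (l := 2 * l) (by positivity))).div_const 2).mono'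
    (ha.exp.mul (hY.aemeasurable.const_mul l).exp).aestronglyMeasurable ?_
  filter_upwards [haX] with ω hω
  rw [norm_of_nonneg (by positivity)]
  exact exp_mul_exp_le_of_le_mul hω

theorem integral_exp_mul_exp_le (hX : HasGaussianTails X c₁ c₂ μ)
    (hY : HasGaussianTails Y c₁ c₂ μ) (hc₁ : 0 ≤ c₁) (hc₂ : 0 < c₂) (hα : 0 ≤ α) (hl : 0 ≤ l)
    (ha : AEMeasurable a μ) (haX : ∀ᵐ ω ∂μ, a ω ≤ α * X ω) :
    ∫ ω, exp (a ω) * exp (l * Y ω) ∂μ ≤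
      (gaussianTailsMGFBound c₁ c₂ (2 * α) + gaussianTailsMGFBound c₁ c₂ (2 * l)) / 2 := by
  have hα₂ : 0 ≤ 2 * α := by positivity
  have hl₂ : 0 ≤ 2 * l := by positivity
  have hintX := hX.integrable_exp_mul hc₁ hc₂ hα₂
  have hintY := hY.integrable_exp_mul hc₁ hc₂ hl₂
  calc ∫ ω, exp (a ω) * exp (l * Y ω) ∂μ
      ≤ ∫ ω, (exp (2 * α * X ω) + exp (2 * l * Y ω)) / 2 ∂μ :=
        integral_mono_ae (hX.integrable_exp_mul_exp hY hc₁ hc₂ hα hl ha haX)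
          ((hintX.add hintY).div_const 2) (haX.mono fun _ => exp_mul_exp_le_of_le_mul)
    _ = (ProbabilityTheory.mgf X μ (2 * α) + ProbabilityTheory.mgf Y μ (2 * l)) / 2 := by
        rw [integral_div, integral_add hintX hintY, ProbabilityTheory.mgf, ProbabilityTheory.mgf]
    _ ≤ (gaussianTailsMGFBound c₁ c₂ (2 * α) + gaussianTailsMGFBound c₁ c₂ (2 * l)) / 2 := by
        gcongr
        · exact hX.mgf_le hc₁ hc₂ hα₂
        · exact hY.mgf_le hc₁ hc₂ hl₂

theorem abs_integral_exp_add_sub_sum_le {b : Ω → ℝ} {s : ℝ} (hX : HasGaussianTails X c₁ c₂ μ)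
    (hY : HasGaussianTails Y c₁ c₂ μ) (hc₁ : 0 ≤ c₁) (hc₂ : 0 < c₂) (hα : 0 ≤ α) (hs : 0 ≤ s)
    (hsl : s + 1 ≤ l) (ha : AEMeasurable a μ) (hb : AEMeasurable b μ)
    (haX : ∀ᵐ ω ∂μ, a ω ≤ α * X ω) (hbY : ∀ᵐ ω ∂μ, |b ω| ≤ s * Y ω) (n : ℕ) :
    |(∫ ω, exp (a ω + b ω) ∂μ) -
        ∑ p ∈ Finset.range n, (1 / (p.factorial : ℝ)) * ∫ ω, exp (a ω) * b ω ^ p ∂μ| ≤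
      n.factorial * s ^ n *
        ((gaussianTailsMGFBound c₁ c₂ (2 * α) + gaussianTailsMGFBound c₁ c₂ (2 * l)) / 2) := by
  have hl : 0 ≤ l := (add_nonneg hs zero_le_one).trans hsl
  simp only [exp_add]
  refine (abs_integral_mul_exp_sub_sum_le ha.exp.aestronglyMeasurable hb.aestronglyMeasurable hs
    hY.nonneg hbY hsl (hX.integrable_exp_mul_exp hY hc₁ hc₂ hα hl ha haX) n).trans ?_
  simp only [abs_exp]
  gcongr
  exact hX.integral_exp_mul_exp_le hY hc₁ hc₂ hα hl ha haX

end HasGaussianTails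

end GaussianTails

theorem stmt13_general {Ω ι : Type*} {mΩ : MeasurableSpace Ω} {μ : Measure Ω}
    [IsProbabilityMeasure μ] {c₁ c₂ : ℝ} (hc₁ : 0 ≤ c₁) (hc₂ : 0 < c₂) {X Y A B : ι → Ω → ℝ}
    (hX : ∀ t, HasGaussianTails (X t) c₁ c₂ μ) (hY : ∀ t, HasGaussianTails (Y t) c₁ c₂ μ)
    {α β : ℝ} (hα : 0 ≤ α) (hβ : 0 < β) {ε : ι → ℝ} (hε : ∀ t, 0 ≤ ε t)
    (hA : ∀ t, AEMeasurable (A t) μ) (hB : ∀ t, AEMeasurable (B t) μ)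
    (hAX : ∀ t, ∀ᵐ ω ∂μ, A t ω ≤ α * X t ω)
    (hBY : ∀ t, ∀ᵐ ω ∂μ, |B t ω| ≤ β * ε t * Y t ω) (n : ℕ) :
    (∀ t, Integrable (fun ω => exp (A t ω + B t ω)) μ ∧
      ∀ p, Integrable (fun ω => exp (A t ω) * B t ω ^ p) μ) ∧
    ∀ M ≥ 0, ∃ C > 0, ∀ t, ε t ≤ M →
      |(∫ ω, exp (A t ω + B t ω) ∂μ) -
        ∑ p ∈ Finset.range n,
          (1 / (p.factorial : ℝ)) * ∫ ω, exp (A t ω) * B t ω ^ p ∂μ| ≤ C * ε t ^ n := by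
  have hs (t : ι) : 0 ≤ β * ε t := mul_nonneg hβ.le (hε t)
  refine ⟨fun t => ?_, fun M hM => ?_⟩
  · have hexpA := (hA t).exp.aestronglyMeasurable
    have hBt := (hB t).aestronglyMeasurable
    have hweight := (hX t).integrable_exp_mul_exp (hY t) hc₁ hc₂ hα
      (add_nonneg (hs t) zero_le_one) (hA t) (hAX t)
    simp only [exp_add]
    exact ⟨integrable_mul_exp_of_abs_le_mul hexpA hBt (hs t) (hY t).nonneg (hBY t) le_rfl hweight,
      integrable_mul_pow_of_abs_le_mul hexpA hBt (hs t) (hY t).nonneg (hBY t) le_rfl hweight⟩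
  · set l := β * M + 1
    set K := (gaussianTailsMGFBound c₁ c₂ (2 * α) + gaussianTailsMGFBound c₁ c₂ (2 * l)) / 2
    have hK : 0 < K := half_pos (add_pos (gaussianTailsMGFBound_pos hc₁ (by positivity))
      (gaussianTailsMGFBound_pos hc₁ (by positivity)))
    refine ⟨n.factorial * β ^ n * K, by positivity, fun t ht => ?_⟩
    have hεl : β * ε t + 1 ≤ l :=
      add_le_add_left (mul_le_mul_of_nonneg_left ht hβ.le) 1
    calc _ ≤ n.factorial * (β * ε t) ^ n * K :=
          (hX t).abs_integral_exp_add_sub_sum_le (hY t) hc₁ hc₂ hα (hs t) hεl (hA t) (hB t)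
            (hAX t) (hBY t) n
      _ = n.factorial * β ^ n * K * ε t ^ n := by rw [mul_pow]; ring

theorem stmt13 {Ω : Type*} [MeasurableSpace Ω] (P : Measure Ω) [IsProbabilityMeasure P]
    (c₁ c₂ : ℝ) (hc₁ : 0 < c₁) (hc₂ : 0 < c₂)
    (G : Ω → ℝ) (Gt : ℝ → Ω → ℝ)
    (hGmeas : Measurable G) (hGtmeas : ∀ t, Measurable (Gt t))
    (hGnn : ∀ ω, 0 ≤ G ω) (hGtnn : ∀ t ω, 0 ≤ Gt t ω)
    (hGtail : ∀ z ≥ 0, P {ω | z < G ω} ≤ ENNReal.ofReal (c₁ * Real.exp (-c₂ * z^2)))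
    (hGttail : ∀ t, ∀ z ≥ 0,
      P {ω | z < Gt t ω} ≤ ENNReal.ofReal (c₁ * Real.exp (-c₂ * z^2)))
    (α β : ℝ) (hα : 0 < α) (hβ : 0 < β)
    (ε : ℝ → ℝ) (hεnn : ∀ t, 0 ≤ ε t) (hεlim : Tendsto ε atTop (nhds 0))
    (A B : ℝ → Ω → ℝ) (hAmeas : ∀ t, Measurable (A t)) (hBmeas : ∀ t, Measurable (B t))
    (hA : ∀ t, ∀ᵐ ω ∂P, |A t ω| ≤ α * G ω)
    (hB : ∀ t, ∀ᵐ ω ∂P, |B t ω| ≤ β * ε t * Gt t ω)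
    (n : ℕ) :
    (∀ t, Integrable (fun ω => Real.exp (A t ω + B t ω)) P ∧
      ∀ p ≤ n, Integrable (fun ω => Real.exp (A t ω) * B t ω ^ p) P) ∧
    ∃ C > 0, ∃ t₀ > (0:ℝ), ∀ t ≥ t₀,
      |(∫ ω, Real.exp (A t ω + B t ω) ∂P) -
        ∑ p ∈ Finset.range (n + 1),
          (1 / (p.factorial : ℝ)) * ∫ ω, Real.exp (A t ω) * B t ω ^ p ∂P|
      ≤ C * ε t ^ (n + 1) := by
  have hG : HasGaussianTails G c₁ c₂ P := ⟨hGmeas.aemeasurable, ae_of_all _ hGnn, hGtail⟩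
  have hGt (t : ℝ) : HasGaussianTails (Gt t) c₁ c₂ P :=
    ⟨(hGtmeas t).aemeasurable, ae_of_all _ (hGtnn t), hGttail t⟩
  obtain ⟨hint, hbound⟩ := stmt13_general hc₁.le hc₂ (fun _ => hG) hGt hα.le hβ hεnn
    (fun t => (hAmeas t).aemeasurable) (fun t => (hBmeas t).aemeasurable)
    (fun t => (hA t).mono fun _ => le_of_abs_le) hB (n + 1)
  obtain ⟨C, hC, hexpansion⟩ := hbound 1 zero_le_one
  obtain ⟨t₁, ht₁⟩ := eventually_atTop.1 (hεlim.eventually_le_const zero_lt_one)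
  exact ⟨fun t => ⟨(hint t).1, fun p _ => (hint t).2 p⟩, C, hC, max t₁ 1, by positivity,
    fun t ht => hexpansion t (ht₁ t (le_of_max_le_left ht))⟩
end

section
/- Let (B_s)_{s≥0} be a one-dimensional Brownian motion on a probability space: an almost surely continuous process with B_0 = 0 and independent increments, B_t − B_s being a centered Gaussian of variance 2(t−s) for 0 ≤ s ≤ t (normalization E[B_t²] = 2t). Then for every ε > 0, the random variable G := sup_{s>0} |B_s| / max(s^{1/2−ε}, s^{1/2+ε}) has Gaussian tails: there exist constants c₁, c₂ > 0 such that P(G > z) ≤ c₁ e^{−c₂ z²} for all z ≥ 0. -/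
open MeasureTheory ProbabilityTheory Filter Real Set Asymptotics

/-- A one-dimensional Brownian motion with normalization `E[B_t^2] = 2t`. -/
structure IsBrownianMotion {Ω : Type*} [MeasurableSpace Ω] (P : Measure Ω)
    (B : ℝ → Ω → ℝ) : Prop where
  cont : ∀ᵐ ω ∂P, Continuous fun s => B s ω
  init : ∀ᵐ ω ∂P, B 0 ω = 0
  meas : ∀ s, Measurable (B s)
  indep : ∀ (n : ℕ) (t : ℕ → ℝ), Monotone t →
    iIndepFun
      (fun i : Fin n => fun ω => B (t ((i : ℕ) + 1)) ω - B (t (i : ℕ)) ω) P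
  gauss : ∀ s t : ℝ, 0 ≤ s → s ≤ t →
    Measure.map (fun ω => B t ω - B s ω) P = gaussianReal 0 ((2 * (t - s)).toNNReal)

/-- Feynman–Kac representation of the solution of the linearised FKPP equation
`∂_t h = ∂_x² h + h` for `x > m t`, with absorbing boundary `h (m t) t = 0` and
initial condition `h₀`:
`h(x,t) = e^t E[h₀(x + B_t) 1{x + B_s > m(t-s) ∀ s ∈ [0,t]}]`. -/
noncomputable def fkppSol {Ω : Type*} [MeasurableSpace Ω] (P : Measure Ω)
    (B : ℝ → Ω → ℝ) (h₀ m : ℝ → ℝ) (x t : ℝ) : ℝ :=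
  Real.exp t *
    ∫ ω, ({ω : Ω | ∀ s ∈ Icc (0:ℝ) t, m (t - s) < x + B s ω}.indicator
      (fun ω => h₀ (x + B t ω)) ω) ∂P

/-!
Two applications of one union bound: if each `A i` has Gaussian tails with the same constants and
the weights `w i ≥ 1` grow fast enough, then `⋃ i, A i (z * w i)` has Gaussian tails with the same
rate. Over the dyadic intervals of `[0, T)`, with weight `n + 1` at level `n`, it shows by chaining
that `sup_{s < T} |B_s| / T^H` has Gaussian tails uniformly in `T`, where `H = 1/2` for Brownian
motion. Over the scales `T = e^(m+1)`, `m ∈ ℤ`, with weight `e^(ε|m|)`, it then controls the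
weighted supremum, since `max (s^(H-ε)) (s^(H+ε)) = s^H e^(ε|log s|)`.
-/

section GaussianTail

variable {Ω ι E : Type*} [MeasurableSpace Ω] {P : Measure Ω} {c₁ c₂ : ℝ}

/-- A family of events `A z`, thought of as `{G > z}` for a nonnegative random variable `G`, has
Gaussian tails with constants `c₁` and `c₂`. Using the events rather than `G` itself allows `G` to
be a supremum that is not known to be finite or measurable. -/
def HasGaussianTail (P : Measure Ω) (A : ℝ → Set Ω) (c₁ c₂ : ℝ) : Prop :=
  ∀ z ≥ 0, P (A z) ≤ ENNReal.ofReal (c₁ * exp (-c₂ * z ^ 2))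

lemma exp_neg_mul_mul_sq_le {c z w : ℝ} (hc : 0 ≤ c) (hz : 1 ≤ z) (hw : 1 ≤ w) :
    exp (-c * (z * w) ^ 2) ≤ exp c * exp (-c * z ^ 2) * exp (-c * w ^ 2) := by
  have hprod : 0 ≤ (z ^ 2 - 1) * (w ^ 2 - 1) :=
    mul_nonneg (sub_nonneg.2 (one_le_pow₀ hz)) (sub_nonneg.2 (one_le_pow₀ hw))
  rw [← exp_add, ← exp_add, exp_le_exp]
  linarith [mul_nonneg hc hprod]

namespace HasGaussianTail

lemma mono_ae {A A' : ℝ → Set Ω} (h : HasGaussianTail P A c₁ c₂)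
    (hA : ∀ᵐ ω ∂P, ∀ z ≥ 0, ω ∈ A' z → ω ∈ A z) : HasGaussianTail P A' c₁ c₂ :=
  fun z hz => (measure_mono_ae (hA.mono fun _ hω => hω z hz)).trans (h z hz)

lemma comp_mul_right {A : ℝ → Set Ω} (h : HasGaussianTail P A c₁ c₂) {K : ℝ} (hK : 0 ≤ K) :
    HasGaussianTail P (fun z => A (z * K)) c₁ (c₂ * K ^ 2) :=
  fun z hz => (h (z * K) (mul_nonneg hz hK)).trans_eq (by ring_nf)

lemma iUnion_mul [IsProbabilityMeasure P] [Countable ι] {A : ι → ℝ → Set Ω} {w : ι → ℝ}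
    (hA : ∀ i, HasGaussianTail P (A i) c₁ c₂) (hc₂ : 0 ≤ c₂) (hw : ∀ i, 1 ≤ w i)
    (hsum : Summable fun i => exp (-c₂ * w i ^ 2)) :
    HasGaussianTail P (fun z => ⋃ i, A i (z * w i))
      (exp c₂ * max 1 (c₁ * ∑' i, exp (-c₂ * w i ^ 2))) c₂ := by
  intro z hz
  set S := ∑' i, exp (-c₂ * w i ^ 2)
  rcases le_total z 1 with hz1 | hz1
  · refine prob_le_one.trans (ENNReal.one_le_ofReal.2 ?_)
    have hexp : 1 ≤ exp c₂ * exp (-c₂ * z ^ 2) := by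
      have hz2 : 0 ≤ 1 - z ^ 2 := sub_nonneg.2 (pow_le_one₀ hz hz1)
      rw [← exp_add]
      exact one_le_exp (by linarith [mul_nonneg hc₂ hz2])
    rw [mul_right_comm]
    exact one_le_mul_of_one_le_of_one_le hexp (le_max_left _ _)
  · calc P (⋃ i, A i (z * w i))
        ≤ ∑' i, P (A i (z * w i)) := measure_iUnion_le _
      _ ≤ ∑' i, ENNReal.ofReal c₁ *
            ENNReal.ofReal (exp c₂ * exp (-c₂ * z ^ 2) * exp (-c₂ * w i ^ 2)) := by
          refine ENNReal.tsum_le_tsum fun i => ?_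
          refine (hA i _ (mul_nonneg hz (zero_le_one.trans (hw i)))).trans ?_
          rw [ENNReal.ofReal_mul' (exp_pos _).le]
          gcongr
          exact exp_neg_mul_mul_sq_le hc₂ hz1 (hw i)
      _ = ENNReal.ofReal (c₁ * (exp c₂ * exp (-c₂ * z ^ 2) * S)) := by
          rw [ENNReal.tsum_mul_left, ← ENNReal.ofReal_tsum_of_nonneg (fun i => by positivity)
            (hsum.mul_left _), tsum_mul_left, ← ENNReal.ofReal_mul' (by positivity)]
      _ ≤ ENNReal.ofReal (exp c₂ * max 1 (c₁ * S) * exp (-c₂ * z ^ 2)) := by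
          refine ENNReal.ofReal_le_ofReal ?_
          calc c₁ * (exp c₂ * exp (-c₂ * z ^ 2) * S)
              = exp c₂ * (c₁ * S) * exp (-c₂ * z ^ 2) := by ring
            _ ≤ exp c₂ * max 1 (c₁ * S) * exp (-c₂ * z ^ 2) := by
                gcongr
                exact le_max_right _ _

end HasGaussianTail

lemma hasGaussianTail_abs_of_hasSubgaussianMGF [IsFiniteMeasure P] {Y : Ω → ℝ} {v : NNReal}
    (hY : HasSubgaussianMGF Y v P) :
    HasGaussianTail P (fun z => {ω | z < |Y ω|}) 2 (1 / (2 * v)) := by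
  intro z hz
  rw [← ofReal_measureReal]
  refine ENNReal.ofReal_le_ofReal ?_
  calc P.real {ω | z < |Y ω|}
      ≤ P.real ({ω | z ≤ Y ω} ∪ {ω | z ≤ (-Y) ω}) :=
        measureReal_mono fun ω hω => (lt_abs.1 hω.out).imp (·.le) (·.le)
    _ ≤ P.real {ω | z ≤ Y ω} + P.real {ω | z ≤ (-Y) ω} := measureReal_union_le _ _
    _ ≤ exp (-z ^ 2 / (2 * v)) + exp (-z ^ 2 / (2 * v)) :=
        add_le_add (hY.measure_ge_le hz) (hY.neg.measure_ge_le hz)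
    _ = 2 * exp (-(1 / (2 * v)) * z ^ 2) := by ring_nf

lemma hasSubgaussianMGF_id_gaussianReal (v : NNReal) :
    HasSubgaussianMGF id v (gaussianReal 0 v) where
  integrable_exp_mul := integrable_exp_mul_gaussianReal
  mgf_le t := by simp [mgf_id_gaussianReal]

lemma IsBrownianMotion.hasGaussianTail_dist [IsFiniteMeasure P] {B : ℝ → Ω → ℝ}
    (hB : IsBrownianMotion P B) {s t : ℝ} (hs : 0 ≤ s) (hst : s < t) :
    HasGaussianTail P (fun z => {ω | z * (t - s) ^ (1 / 2 : ℝ) < dist (B s ω) (B t ω)}) 2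
      (1 / 4) := by
  have hmeas : AEMeasurable (fun ω => B t ω - B s ω) P := ((hB.meas t).sub (hB.meas s)).aemeasurable
  have hsub : HasSubgaussianMGF (fun ω => B t ω - B s ω) (2 * (t - s)).toNNReal P := by
    rw [← HasSubgaussianMGF.id_map_iff hmeas, hB.gauss s t hs hst.le]
    exact hasSubgaussianMGF_id_gaussianReal _
  have hpos : 0 < t - s := sub_pos.2 hst
  have hconst : 1 / (2 * ((2 * (t - s)).toNNReal : ℝ)) * ((t - s) ^ (1 / 2 : ℝ)) ^ 2 = 1 / 4 := by
    rw [Real.coe_toNNReal _ (by positivity), ← sqrt_eq_rpow, sq_sqrt hpos.le]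
    field
  have htail := (hasGaussianTail_abs_of_hasSubgaussianMGF hsub).comp_mul_right
    (rpow_nonneg hpos.le (1 / 2))
  simpa only [hconst, dist_comm (B s _), Real.dist_eq] using htail

lemma summable_two_pow_mul_exp_neg_mul_sq {c : ℝ} (hc : 0 < c) :
    Summable fun n : ℕ => 2 ^ n * exp (-c * (n + 1) ^ 2) := by
  refine summable_of_ratio_test_tendsto_lt_one zero_lt_one (.of_forall fun n => by positivity) ?_
  have hlim : Tendsto (fun n : ℕ => 2 * exp (-(c * (2 * n + 3)))) atTop (nhds (2 * 0)) := by
    refine (tendsto_exp_neg_atTop_nhds_zero.comp ?_).const_mul 2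
    exact (tendsto_atTop_add_const_right _ _
      (tendsto_natCast_atTop_atTop.const_mul_atTop two_pos)).const_mul_atTop hc
  rw [mul_zero] at hlim
  refine hlim.congr fun n => ?_
  rw [norm_of_nonneg (by positivity), norm_of_nonneg (by positivity), eq_div_iff (by positivity),
    mul_mul_mul_comm, ← exp_add, pow_succ']
  push_cast
  ring_nf

lemma summable_exp_neg_mul_sq_dyadic {c : ℝ} (hc : 0 < c) :
    Summable fun p : Σ n : ℕ, Fin (2 ^ n) => exp (-c * ((p.1 : ℝ) + 1) ^ 2) := by
  refine (summable_sigma_of_nonneg fun p => (exp_pos _).le).2 ⟨fun n => .of_finite, ?_⟩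
  simpa using summable_two_pow_mul_exp_neg_mul_sq hc

lemma summable_succ_mul_rpow_pow_succ {H : ℝ} (hH : 0 < H) :
    Summable fun n : ℕ => ((n : ℝ) + 1) * ((1 / 2) ^ H) ^ (n + 1) := by
  have hlt : ‖(1 / 2 : ℝ) ^ H‖ < 1 := by
    rw [norm_of_nonneg (by positivity)]
    exact rpow_lt_one (by norm_num) (by norm_num) hH
  simpa using (summable_nat_add_iff 1).2 (hasSum_coe_mul_geometric_of_norm_lt_one hlt).summable

lemma max_rpow_sub_rpow_add {H s ε : ℝ} (hs : 0 < s) (hε : 0 ≤ ε) :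
    max (s ^ (H - ε)) (s ^ (H + ε)) = exp (H * log s + ε * |log s|) := by
  rw [rpow_def_of_pos hs, rpow_def_of_pos hs, ← exp_monotone.map_max, ← abs_of_nonneg hε,
    ← abs_mul, abs_of_nonneg hε, abs_eq_max_neg, max_comm (ε * log s), ← max_add_add_left]
  ring_nf

lemma exp_mul_exp_floor_log_rpow_le {H s ε : ℝ} (hs : 0 < s) (hε : 0 ≤ ε) (hH : 0 ≤ H) :
    exp (ε * |(⌊log s⌋ : ℝ)|) * exp (⌊log s⌋ + 1) ^ H
      ≤ exp (H + ε) * max (s ^ (H - ε)) (s ^ (H + ε)) := by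
  rw [max_rpow_sub_rpow_add hs hε, ← exp_mul, ← exp_add, ← exp_add, exp_le_exp]
  have hfloor : (⌊log s⌋ : ℝ) ≤ log s := Int.floor_le _
  have habs : |(⌊log s⌋ : ℝ)| ≤ |log s| + 1 := by
    have := Int.lt_floor_add_one (log s)
    grind
  nlinarith [mul_le_mul_of_nonneg_left hfloor hH, mul_le_mul_of_nonneg_left habs hε]

lemma summable_int_exp_neg_mul_exp_sq {c ε : ℝ} (hc : 0 < c) (hε : 0 < ε) :
    Summable fun m : ℤ => exp (-c * exp (ε * |(m : ℝ)|) ^ 2) := by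
  have hnat : Summable fun n : ℕ => exp (-c * exp (ε * n) ^ 2) := by
    refine .of_nonneg_of_le (fun n => (exp_pos _).le) (fun n => exp_le_exp.2 ?_)
      (summable_exp_nat_mul_iff.2 (neg_neg_of_pos (mul_pos hc hε)))
    have hle : ε * n ≤ exp (ε * n) ^ 2 := by
      have := add_one_le_exp (ε * n)
      nlinarith [mul_nonneg hε.le n.cast_nonneg]
    nlinarith
  exact .of_nat_of_neg (by simpa using hnat) (by simpa using hnat)

variable [PseudoMetricSpace E]

-- The dyadic approximations `⌊2ⁿ r⌋ / 2ⁿ` of `r` start at `0`, and passing from one to the next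
-- either does nothing or moves to the midpoint of a dyadic interval.
lemma dist_zero_le_tsum_of_dyadic {f : ℝ → E} {a : ℕ → ℝ} (hf : ContinuousOn f (Ico 0 1))
    (ha : Summable a)
    (hstep : ∀ n k : ℕ, k < 2 ^ n →
      dist (f (k / 2 ^ n)) (f ((k + 1 / 2) / 2 ^ n)) ≤ a n)
    {r : ℝ} (hr : r ∈ Ico 0 1) : dist (f 0) (f r) ≤ ∑' n, a n := by
  set k : ℕ → ℕ := fun n => ⌊r * 2 ^ n⌋₊ with hk
  have hle (n : ℕ) : (k n : ℝ) / 2 ^ n ≤ r :=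
    (div_le_iff₀ (by positivity)).2 (Nat.floor_le (mul_nonneg hr.1 (by positivity)))
  have hlim : Tendsto (fun n => (k n : ℝ) / 2 ^ n) atTop (nhdsWithin r (Ico 0 1)) :=
    tendsto_nhdsWithin_iff.2 ⟨(tendsto_nat_floor_mul_div_atTop hr.1).comp
      (tendsto_pow_atTop_atTop_of_one_lt one_lt_two),
      .of_forall fun n => ⟨by positivity, (hle n).trans_lt hr.2⟩⟩
  have hhalf (n : ℕ) : k n = k (n + 1) / 2 := by
    rw [hk, ← Nat.floor_div_ofNat, pow_succ, ← mul_assoc, mul_div_cancel_right₀ _ two_ne_zero]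
  have hdist (n : ℕ) : dist (f (k n / 2 ^ n)) (f (k (n + 1) / 2 ^ (n + 1))) ≤ a n := by
    have hkn : k n < 2 ^ n := by
      have : (k n : ℝ) < 2 ^ n := by
        simpa using (div_lt_iff₀ (by positivity)).1 ((hle n).trans_lt hr.2)
      exact_mod_cast this
    have ha_nonneg : 0 ≤ a n := dist_nonneg.trans (hstep n (k n) hkn)
    obtain heven | hodd : k (n + 1) = 2 * k n ∨ k (n + 1) = 2 * k n + 1 := by grind
    · have hpoint : (k (n + 1) : ℝ) / 2 ^ (n + 1) = k n / 2 ^ n := by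
        rw [heven, pow_succ]
        push_cast
        field
      rwa [hpoint, dist_self]
    · have hpoint : (k (n + 1) : ℝ) / 2 ^ (n + 1) = (k n + 1 / 2) / 2 ^ n := by
        rw [hodd, pow_succ]
        push_cast
        field
      rw [hpoint]
      exact hstep n (k n) hkn
  have hzero : (k 0 : ℝ) / 2 ^ 0 = 0 := by
    simp [hk, Nat.floor_eq_zero.2 hr.2]
  simpa only [hzero] using
    dist_le_tsum_of_dist_le_of_tendsto₀ a hdist ha ((hf r hr).tendsto.comp hlim)

lemma dist_zero_le_of_dyadic_le_rpow {f : ℝ → E} {H K T : ℝ} (hH : 0 < H) (hT : 0 < T)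
    (hf : ContinuousOn f (Ico 0 T))
    (hstep : ∀ n k : ℕ, k < 2 ^ n →
      dist (f (T * (k / 2 ^ n))) (f (T * ((k + 1 / 2) / 2 ^ n)))
        ≤ K * (n + 1) * (T * ((k + 1 / 2) / 2 ^ n) - T * (k / 2 ^ n)) ^ H)
    {s : ℝ} (hs : s ∈ Ico 0 T) :
    dist (f 0) (f s) ≤ K * T ^ H * ∑' n : ℕ, ((n : ℝ) + 1) * ((1 / 2) ^ H) ^ (n + 1) := by
  have hlen (n k : ℕ) : (T * ((k + 1 / 2) / 2 ^ n) - T * (k / 2 ^ n)) ^ H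
      = T ^ H * ((1 / 2) ^ H) ^ (n + 1) := by
    rw [rpow_pow_comm (by norm_num), ← mul_rpow hT.le (by positivity), one_div_pow]
    congr 1
    field
  have hunit (n k : ℕ) (hk : k < 2 ^ n) :
      dist (f (T * (k / 2 ^ n))) (f (T * ((k + 1 / 2) / 2 ^ n)))
        ≤ K * T ^ H * ((n + 1) * ((1 / 2) ^ H) ^ (n + 1)) := by
    refine (hstep n k hk).trans_eq ?_
    rw [hlen]
    ring
  have hpath : ContinuousOn (fun r => f (T * r)) (Ico 0 1) :=
    hf.comp (by fun_prop) fun r hr => ⟨mul_nonneg hT.le hr.1, mul_lt_of_lt_one_right hT hr.2⟩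
  have hbound := dist_zero_le_tsum_of_dyadic hpath
    ((summable_succ_mul_rpow_pow_succ hH).mul_left _) hunit
    (r := s / T) ⟨div_nonneg hs.1 hT.le, (div_lt_one hT).2 hs.2⟩
  rwa [tsum_mul_left, mul_zero, mul_div_cancel₀ _ hT.ne'] at hbound

variable [IsProbabilityMeasure P] {X : ℝ → Ω → E} {H : ℝ}

-- The increments over dyadic intervals of level `n` are compared with `n + 1` times their natural
-- scale: both the union bound over the `2ⁿ` intervals and the sum of the thresholds over `n`
-- then converge.
lemma exists_hasGaussianTail_dist_zero_Ico (hH : 0 < H) (hc₂ : 0 < c₂)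
    (hcont : ∀ᵐ ω ∂P, ContinuousOn (fun s => X s ω) (Ici 0))
    (htail : ∀ s t, 0 ≤ s → s < t →
      HasGaussianTail P (fun z => {ω | z * (t - s) ^ H < dist (X s ω) (X t ω)}) c₁ c₂) :
    ∃ C₁, ∃ C₂ > 0, ∀ T > 0, HasGaussianTail P
      (fun z => {ω | ∃ s ∈ Ico 0 T, z * T ^ H < dist (X 0 ω) (X s ω)}) C₁ C₂ := by
  set V : ℝ := ∑' n : ℕ, ((n : ℝ) + 1) * ((1 / 2) ^ H) ^ (n + 1) with hV
  have hV0 : 0 < V :=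
    (summable_succ_mul_rpow_pow_succ hH).tsum_pos (fun n => by positivity) 0 (by positivity)
  refine ⟨exp c₂ * max 1 (c₁ * ∑' p : Σ n : ℕ, Fin (2 ^ n), exp (-c₂ * ((p.1 : ℝ) + 1) ^ 2)),
    c₂ * V⁻¹ ^ 2, by positivity, fun T hT => ?_⟩
  have hmid (p : Σ n : ℕ, Fin (2 ^ n)) :
      T * ((p.2 : ℝ) / 2 ^ p.1) < T * ((p.2 + 1 / 2) / 2 ^ p.1) := by
    gcongr
    simp
  have hunion := (HasGaussianTail.iUnion_mul (w := fun p : Σ n : ℕ, Fin (2 ^ n) => (p.1 : ℝ) + 1)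
    (fun p => htail _ _ (by positivity) (hmid p)) hc₂.le (by simp)
    (summable_exp_neg_mul_sq_dyadic hc₂)).comp_mul_right (inv_nonneg.2 hV0.le)
  refine hunion.mono_ae ?_
  filter_upwards [hcont] with ω hω z _ ⟨s, hs, hlt⟩
  by_contra hnot
  simp only [mem_iUnion, mem_ofPred_eq, not_exists, not_lt] at hnot
  have hbound := dist_zero_le_of_dyadic_le_rpow hH hT (hω.mono Ico_subset_Ici_self)
    (fun n k hk => hnot ⟨n, k, hk⟩) hs
  refine hlt.not_ge (hbound.trans_eq ?_)
  rw [← hV]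
  field

theorem stmt16_general {ε : ℝ} (hH : 0 < H) (hc₂ : 0 < c₂)
    (hcont : ∀ᵐ ω ∂P, ContinuousOn (fun s => X s ω) (Ici 0))
    (htail : ∀ s t, 0 ≤ s → s < t →
      HasGaussianTail P (fun z => {ω | z * (t - s) ^ H < dist (X s ω) (X t ω)}) c₁ c₂)
    (hε : 0 < ε) :
    ∃ C₁ > 0, ∃ C₂ > 0, HasGaussianTail P
      (fun z => {ω | ∃ s > 0, z * max (s ^ (H - ε)) (s ^ (H + ε)) < dist (X 0 ω) (X s ω)})
      C₁ C₂ := by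
  obtain ⟨D₁, D₂, hD₂, hmax⟩ := exists_hasGaussianTail_dist_zero_Ico hH hc₂ hcont htail
  have hunion := (HasGaussianTail.iUnion_mul (w := fun m : ℤ => exp (ε * |(m : ℝ)|))
    (fun m => hmax (exp (m + 1)) (exp_pos _)) hD₂.le (fun m => one_le_exp (by positivity))
    (summable_int_exp_neg_mul_exp_sq hD₂ hε)).comp_mul_right (exp_pos (-(H + ε))).le
  refine ⟨_, by positivity, _, by positivity, hunion.mono_ae (.of_forall ?_)⟩
  rintro ω z hz ⟨s, hs, hlt⟩
  have hsT : s < exp (⌊log s⌋ + 1) := (log_lt_iff_lt_exp hs).1 (Int.lt_floor_add_one _)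
  refine mem_iUnion.2 ⟨⌊log s⌋, s, ⟨hs.le, hsT⟩, lt_of_le_of_lt ?_ hlt⟩
  calc z * exp (-(H + ε)) * exp (ε * |(⌊log s⌋ : ℝ)|) * exp (⌊log s⌋ + 1) ^ H
      = z * exp (-(H + ε)) * (exp (ε * |(⌊log s⌋ : ℝ)|) * exp (⌊log s⌋ + 1) ^ H) := by ring
    _ ≤ z * exp (-(H + ε)) * (exp (H + ε) * max (s ^ (H - ε)) (s ^ (H + ε))) := by
        gcongr z * exp (-(H + ε)) * ?_
        exact exp_mul_exp_floor_log_rpow_le hs hε.le hH.le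
    _ = z * max (s ^ (H - ε)) (s ^ (H + ε)) := by
        rw [exp_neg]
        field

end GaussianTail

theorem stmt16 {Ω : Type*} [MeasurableSpace Ω] (P : Measure Ω) [IsProbabilityMeasure P]
    (B : ℝ → Ω → ℝ) (hB : IsBrownianMotion P B)
    (ε : ℝ) (hε : 0 < ε) :
    ∃ c₁ > 0, ∃ c₂ > 0, ∀ z ≥ (0:ℝ),
      P {ω | ∃ s > (0:ℝ),
          z * max (s ^ ((1:ℝ)/2 - ε)) (s ^ ((1:ℝ)/2 + ε)) < |B s ω|} ≤
        ENNReal.ofReal (c₁ * Real.exp (-c₂ * z ^ 2)) :=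
  have ⟨c₁, hc₁, c₂, hc₂, htail⟩ := stmt16_general one_half_pos (by norm_num)
    (hB.cont.mono fun _ h => h.continuousOn) (fun _ _ => hB.hasGaussianTail_dist) hε
  ⟨c₁, hc₁, c₂, hc₂, htail.mono_ae (hB.init.mono fun ω h0 z _ => by simp [h0, Real.dist_eq])⟩
end

section
/- Let (B_s)_{s≥0} be a one-dimensional Brownian motion on a probability space: an almost surely continuous process with B_0 = 0 and independent increments, B_t − B_s being a centered Gaussian of variance 2(t−s) for 0 ≤ s ≤ t (normalization E[B_t²] = 2t). Let m : [0,∞) → ℝ be twice continuously differentiable with m''(s) = O(1/s²) as s → ∞. Then: (i) the limit v := lim_{s→∞} m'(s) exists in ℝ; (ii) Δ := (1/4) ∫₀^∞ (m'(s) − v)² ds is finite; (iii) almost surely the integral X := (1/2) ∫₀^∞ m''(s) B_s ds converges absolutely; and (iv) E[e^X] = e^Δ. -/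
open MeasureTheory ProbabilityTheory Filter Real Set Asymptotics

/-
With `g = m''`, the variable `∫ g(s) B_s ds` lies in the closed linear span of the `B_s` in `L²(P)`,
because by Fubini it is orthogonal to everything orthogonal to all the `B_s`. Gaussian variables are
closed in `L²(P)`, so it is a centred Gaussian, and only its variance has to be computed.
Since `E[B_s B_t] = 2 min(s, t) = 2 ∫ 1_{u < s} 1_{u < t} du`, the second moment of
`∫ g(s) B_s ds` is twice the squared `L²(du)` norm of
`∫ g(s) 1_{u < s} ds = ∫_u^∞ m'' = v - m'(u)`. All the integrals converge as soon as `√s * g(s)` is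
integrable, `√s` being the order of the `L²` norms of both `B_s` and `1_{· < s}`.
-/

section GaussianClosed

variable {Ω : Type*} [MeasurableSpace Ω] {P : Measure Ω}

lemma continuous_integral_Lp_two [IsFiniteMeasure P] :
    Continuous fun X : Lp ℝ 2 P ↦ ∫ ω, X ω ∂P := by
  have hinner (X : Lp ℝ 2 P) :
      ∫ ω, X ω ∂P = inner ℝ (indicatorConstLp 2 .univ (measure_ne_top P univ) (1 : ℝ)) X := by
    rw [L2.inner_indicatorConstLp_one, setIntegral_univ]
  simp_rw [hinner]
  fun_prop

lemma norm_sq_Lp_two_eq_integral_sq (X : Lp ℝ 2 P) : ‖X‖ ^ 2 = ∫ ω, X ω ^ 2 ∂P := by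
  rw [← real_inner_self_eq_norm_sq, L2.inner_def]
  simp

lemma continuous_variance_Lp_two [IsProbabilityMeasure P] :
    Continuous fun X : Lp ℝ 2 P ↦ Var[X; P] := by
  have hvar (X : Lp ℝ 2 P) : Var[X; P] = ‖X‖ ^ 2 - (∫ ω, X ω ∂P) ^ 2 := by
    rw [variance_eq_sub (Lp.memLp X), norm_sq_Lp_two_eq_integral_sq]
    rfl
  simp_rw [hvar]
  exact (continuous_norm.pow 2).sub (continuous_integral_Lp_two.pow 2)

lemma continuous_charFun_map_Lp [IsProbabilityMeasure P] {p : ENNReal} [Fact (1 ≤ p)] (t : ℝ) :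
    Continuous fun X : Lp ℝ p P ↦ charFun (P.map X) t := by
  refine SeqContinuous.continuous fun X Y hXY ↦ ?_
  have hlaw := ((tendstoInMeasure_of_tendsto_Lp hXY).tendstoInDistribution
    fun n ↦ (Lp.aestronglyMeasurable (X n)).aemeasurable).tendsto
  exact ProbabilityMeasure.tendsto_iff_tendsto_charFun.1 hlaw t

lemma isClosed_setOf_hasGaussianLaw [IsProbabilityMeasure P] :
    IsClosed {X : Lp ℝ 2 P | HasGaussianLaw X P} := by
  have hset : {X : Lp ℝ 2 P | HasGaussianLaw X P} = ⋂ t : ℝ, {X : Lp ℝ 2 P |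
      charFun (P.map X) t = Complex.exp
        ((t * ∫ ω, X ω ∂P : ℝ) * Complex.I - (t ^ 2 * Var[X; P] : ℝ) / 2)} := by
    ext X
    simp only [mem_ofPred_eq, mem_iInter, ← integral_const_mul, ← variance_const_mul,
      hasGaussianLaw_iff_charFun_map_eq (Lp.aestronglyMeasurable X).aemeasurable,
      RCLike.inner_apply', conj_trivial]
  rw [hset]
  refine isClosed_iInter fun t ↦ isClosed_eq (continuous_charFun_map_Lp t) ?_
  have := continuous_integral_Lp_two (P := P)
  have := continuous_variance_Lp_two (P := P)
  fun_prop

lemma hasGaussianLaw_of_mem_closure_span {T : Type*} {Z : T → Ω → ℝ}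
    (hZ : IsGaussianProcess Z P) {X : Lp ℝ 2 P}
    (hX : X ∈ (Submodule.span ℝ
      (range fun t ↦ (hZ.hasGaussianLaw_eval t).memLp_two.toLp)).topologicalClosure) :
    HasGaussianLaw X P := by
  have := hZ.isProbabilityMeasure
  have hZ2 (t : T) : MemLp (Z t) 2 P := (hZ.hasGaussianLaw_eval t).memLp_two
  refine closure_minimal (fun Y hY ↦ ?_) isClosed_setOf_hasGaussianLaw hX
  obtain ⟨c, rfl⟩ := Finsupp.mem_span_range_iff_exists_finsupp.1 hY
  refine ((hZ.smul c).hasGaussianLaw_fun_sum (I := c.support)).congr ?_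
  have hterm (t : T) : ⇑(c t • (hZ2 t).toLp) =ᵐ[P] fun ω ↦ c t • Z t ω :=
    (Lp.coeFn_smul _ _).trans ((hZ2 t).coeFn_toLp.const_smul (c t))
  filter_upwards [Lp.coeFn_fun_finsetSum c.support fun t ↦ c t • (hZ2 t).toLp,
    (Finset.eventually_all c.support).2 fun t _ ↦ hterm t] with ω hsum hω
  exact (hsum.trans (Finset.sum_congr rfl hω)).symm

end GaussianClosed

/-- The family `Z` of functions on `Ω` is absolutely integrable in `L²(P)` against `μ`, so that
`∫ t, Z t ∂μ` is an element of `L²(P)`. Only the pointwise integrals `∫ t, Z t ω ∂μ` are ever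
formed, which is why joint measurability is required instead of strong measurability of
`t ↦ Z t` as an `L²(P)`-valued function. -/
structure L2Integrable {T Ω : Type*} [MeasurableSpace T] [MeasurableSpace Ω] (Z : T → Ω → ℝ)
    (μ : Measure T) (P : Measure Ω) : Prop where
  aestronglyMeasurable_uncurry : AEStronglyMeasurable (Function.uncurry Z) (μ.prod P)
  memLp (t : T) : MemLp (Z t) 2 P
  integrable_norm : Integrable (fun t ↦ √(∫ ω, Z t ω ^ 2 ∂P)) μ

lemma integral_norm_mul_le_sqrt_mul_sqrt {Ω : Type*} [MeasurableSpace Ω] {P : Measure Ω}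
    {X Y : Ω → ℝ} (hX : MemLp X 2 P) (hY : MemLp Y 2 P) :
    ∫ ω, ‖X ω * Y ω‖ ∂P ≤ √(∫ ω, X ω ^ 2 ∂P) * √(∫ ω, Y ω ^ 2 ∂P) := by
  have h : ∫ ω, ‖X ω‖ * ‖Y ω‖ ∂P ≤
      (∫ ω, ‖X ω‖ ^ (2 : ℝ) ∂P) ^ (1 / 2 : ℝ) * (∫ ω, ‖Y ω‖ ^ (2 : ℝ) ∂P) ^ (1 / 2 : ℝ) :=
    integral_mul_norm_le_Lp_mul_Lq .two_two (by simpa using hX) (by simpa using hY)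
  simpa [sqrt_eq_rpow] using h

lemma integral_prod_mul_self {T : Type*} [MeasurableSpace T] {μ : Measure T} [SFinite μ]
    (f : T → ℝ) : ∫ p : T × T, f p.1 * f p.2 ∂μ.prod μ = (∫ t, f t ∂μ) ^ 2 := by
  rw [integral_prod_mul, sq]

namespace L2Integrable

variable {T Ω : Type*} [MeasurableSpace T] [MeasurableSpace Ω] {μ : Measure T} {P : Measure Ω}
  {Z : T → Ω → ℝ}

lemma integrable_prod_mul [SFinite P] (hZ : L2Integrable Z μ P) {Y : Ω → ℝ} (hY : MemLp Y 2 P) :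
    Integrable (fun z : T × Ω ↦ Z z.1 z.2 * Y z.2) (μ.prod P) := by
  have hmeas : AEStronglyMeasurable (fun z : T × Ω ↦ Z z.1 z.2 * Y z.2) (μ.prod P) :=
    hZ.aestronglyMeasurable_uncurry.mul hY.1.comp_snd
  rw [integrable_prod_iff hmeas]
  refine ⟨.of_forall fun t ↦ (hZ.memLp t).integrable_mul hY,
    (hZ.integrable_norm.mul_const √(∫ ω, Y ω ^ 2 ∂P)).mono' hmeas.norm.integral_prod_right'
      (.of_forall fun t ↦ ?_)⟩
  rw [norm_of_nonneg (integral_nonneg fun _ ↦ norm_nonneg _)]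
  exact integral_norm_mul_le_sqrt_mul_sqrt (hZ.memLp t) hY

lemma integrable_uncurry [IsFiniteMeasure P] (hZ : L2Integrable Z μ P) :
    Integrable (Function.uncurry Z) (μ.prod P) := by
  simpa using! hZ.integrable_prod_mul (memLp_const 1)

variable [SFinite μ]

lemma integrable_prod_prod_mul [SFinite P] (hZ : L2Integrable Z μ P) :
    Integrable (fun z : (T × T) × Ω ↦ Z z.1.1 z.2 * Z z.1.2 z.2) ((μ.prod μ).prod P) := by
  have hmeas : AEStronglyMeasurable (fun z : (T × T) × Ω ↦ Z z.1.1 z.2 * Z z.1.2 z.2)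
      ((μ.prod μ).prod P) :=
    .mul (hZ.aestronglyMeasurable_uncurry.comp_quasiMeasurePreserving
        (QuasiMeasurePreserving.prodMap Measure.quasiMeasurePreserving_fst (.id P)))
      (hZ.aestronglyMeasurable_uncurry.comp_quasiMeasurePreserving
        (QuasiMeasurePreserving.prodMap Measure.quasiMeasurePreserving_snd (.id P)))
  rw [integrable_prod_iff hmeas]
  refine ⟨.of_forall fun p ↦ (hZ.memLp p.1).integrable_mul (hZ.memLp p.2),
    (hZ.integrable_norm.mul_prod hZ.integrable_norm).mono' hmeas.norm.integral_prod_right'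
      (.of_forall fun p ↦ ?_)⟩
  rw [norm_of_nonneg (integral_nonneg fun _ ↦ norm_nonneg _)]
  exact integral_norm_mul_le_sqrt_mul_sqrt (hZ.memLp p.1) (hZ.memLp p.2)

lemma memLp_integral [SFinite P] (hZ : L2Integrable Z μ P) : MemLp (fun ω ↦ ∫ t, Z t ω ∂μ) 2 P := by
  refine (memLp_two_iff_integrable_sq
    hZ.aestronglyMeasurable_uncurry.prod_swap.integral_prod_right').2 ?_
  exact hZ.integrable_prod_prod_mul.integral_prod_right.congr
    (.of_forall fun ω ↦ integral_prod_mul_self (Z · ω))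

lemma integral_integral_sq [SFinite P] (hZ : L2Integrable Z μ P) :
    ∫ ω, (∫ t, Z t ω ∂μ) ^ 2 ∂P = ∫ p : T × T, ∫ ω, Z p.1 ω * Z p.2 ω ∂P ∂μ.prod μ := by
  simp_rw [← integral_prod_mul_self]
  exact (integral_integral_swap hZ.integrable_prod_prod_mul).symm

lemma toLp_integral_mem_closure_span [SFinite P] (hZ : L2Integrable Z μ P) :
    hZ.memLp_integral.toLp ∈
      (Submodule.span ℝ (range fun t ↦ (hZ.memLp t).toLp)).topologicalClosure := by
  rw [← Submodule.orthogonal_orthogonal_eq_closure, Submodule.mem_orthogonal]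
  intro Y hY
  have horth (t : T) : ∫ ω, Z t ω * Y ω ∂P = 0 := by
    rw [← hY _ (Submodule.subset_span ⟨t, rfl⟩), L2.inner_def]
    refine integral_congr_ae ?_
    filter_upwards [(hZ.memLp t).coeFn_toLp] with ω hω
    simp [hω, mul_comm]
  calc inner ℝ Y hZ.memLp_integral.toLp
      = ∫ ω, ∫ t, Z t ω * Y ω ∂μ ∂P := by
        rw [L2.inner_def]
        refine integral_congr_ae ?_
        filter_upwards [hZ.memLp_integral.coeFn_toLp] with ω hω
        simp [hω, integral_mul_const]
    _ = ∫ t, ∫ ω, Z t ω * Y ω ∂P ∂μ :=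
        (integral_integral_swap (hZ.integrable_prod_mul (Lp.memLp Y))).symm
    _ = 0 := by simp [horth]

lemma hasGaussianLaw_integral (hZ : L2Integrable Z μ P) (hG : IsGaussianProcess Z P) :
    HasGaussianLaw (fun ω ↦ ∫ t, Z t ω ∂μ) P :=
  have := hG.isProbabilityMeasure
  (hasGaussianLaw_of_mem_closure_span hG hZ.toLp_integral_mem_closure_span).congr
    hZ.memLp_integral.coeFn_toLp

lemma map_integral_eq_gaussianReal (hZ : L2Integrable Z μ P) (hG : IsGaussianProcess Z P)
    (hZ0 : ∀ t, ∫ ω, Z t ω ∂P = 0) :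
    P.map (fun ω ↦ ∫ t, Z t ω ∂μ) =
      gaussianReal 0 (∫ ω, (∫ t, Z t ω ∂μ) ^ 2 ∂P).toNNReal := by
  have := hG.isProbabilityMeasure
  have hmean : ∫ ω, ∫ t, Z t ω ∂μ ∂P = 0 := by
    rw [← integral_integral_swap hZ.integrable_uncurry]
    simp [hZ0]
  rw [(hZ.hasGaussianLaw_integral hG).map_eq_gaussianReal,
    variance_of_integral_eq_zero hZ.memLp_integral.1.aemeasurable hmean, hmean]

end L2Integrable

lemma sqrt_integral_sq_const_mul {Ω : Type*} [MeasurableSpace Ω] {P : Measure Ω} (c : ℝ)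
    (X : Ω → ℝ) : √(∫ ω, (c * X ω) ^ 2 ∂P) = |c| * √(∫ ω, X ω ^ 2 ∂P) := by
  simp_rw [mul_pow, integral_const_mul, sqrt_mul (sq_nonneg c), sqrt_sq_eq_abs]

lemma l2Integrable_mul_of_integrable {T Ω : Type*} [MeasurableSpace T] [MeasurableSpace Ω]
    {μ : Measure T} {P : Measure Ω} {g : T → ℝ} {W : T → Ω → ℝ}
    (hg : AEStronglyMeasurable g μ)
    (hW : AEStronglyMeasurable (Function.uncurry W) (μ.prod P)) (hW2 : ∀ t, MemLp (W t) 2 P)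
    (hgW : Integrable (fun t ↦ √(∫ ω, W t ω ^ 2 ∂P) * g t) μ) :
    L2Integrable (fun t ω ↦ g t * W t ω) μ P where
  aestronglyMeasurable_uncurry := hg.comp_fst.mul hW
  memLp t := (hW2 t).const_mul (g t)
  integrable_norm := hgW.norm.congr <| .of_forall fun t ↦ by
    simp_rw [sqrt_integral_sq_const_mul, norm_mul, norm_of_nonneg (sqrt_nonneg _), norm_eq_abs,
      mul_comm]

section HalfLine

variable {g : ℝ → ℝ}

lemma aestronglyMeasurable_of_integrableOn_sqrt_mul
    (hg : IntegrableOn (fun s ↦ √s * g s) (Ioi 0)) :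
    AEStronglyMeasurable g (volume.restrict (Ioi 0)) := by
  have hinv : AEStronglyMeasurable (fun s : ℝ ↦ (√s)⁻¹) (volume.restrict (Ioi 0)) := by fun_prop
  refine (hinv.mul hg.1).congr ?_
  filter_upwards [ae_restrict_mem measurableSet_Ioi] with s hs
  exact inv_mul_cancel_left₀ (sqrt_pos.2 hs).ne' (g s)

lemma integrableOn_Ioi_of_integrableOn_sqrt_mul
    (hg : IntegrableOn (fun s ↦ √s * g s) (Ioi 0)) {a : ℝ} (ha : 0 < a) :
    IntegrableOn g (Ioi a) := by
  have hsub : Ioi a ⊆ Ioi 0 := Ioi_subset_Ioi ha.le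
  refine Integrable.mono' ((hg.mono_set hsub).norm.const_mul (√a)⁻¹)
    ((aestronglyMeasurable_of_integrableOn_sqrt_mul hg).mono_set hsub) ?_
  filter_upwards [ae_restrict_mem measurableSet_Ioi] with s hs
  rw [norm_mul, norm_of_nonneg (sqrt_nonneg s), ← mul_assoc]
  refine le_mul_of_one_le_left (norm_nonneg _) ?_
  rw [inv_mul_eq_div, one_le_div (sqrt_pos.2 ha)]
  exact sqrt_le_sqrt hs.le

lemma setIntegral_Ioi_indicator_Iio_mul_indicator_Iio (s t : ℝ) :
    ∫ u in Ioi 0, (Iio s).indicator 1 u * (Iio t).indicator 1 u = max (min s t) (0 : ℝ) := by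
  simp_rw [← inter_indicator_mul, Iio_inter_Iio]
  simp [measureReal_restrict_apply measurableSet_Iio, Iio_inter_Ioi]

lemma l2Integrable_mul_indicator_Iio (hg : IntegrableOn (fun s ↦ √s * g s) (Ioi 0)) :
    L2Integrable (fun s u ↦ g s * (Iio s).indicator 1 u) (volume.restrict (Ioi 0))
      (volume.restrict (Ioi 0)) := by
  refine l2Integrable_mul_of_integrable (aestronglyMeasurable_of_integrableOn_sqrt_mul hg) ?_
    (fun s ↦ ?_) ?_
  · have : MeasurableSet {z : ℝ × ℝ | z.2 < z.1} := measurableSet_lt measurable_snd measurable_fst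
    exact (measurable_one.indicator this).aestronglyMeasurable
  · refine (memLp_indicator_const 2 measurableSet_Iio (1 : ℝ) (.inr ?_))
    simp [Measure.restrict_apply, Iio_inter_Ioi]
  · refine hg.congr_fun (fun s hs ↦ ?_) measurableSet_Ioi
    simp_rw [sq, setIntegral_Ioi_indicator_Iio_mul_indicator_Iio, min_self,
      max_eq_left (mem_Ioi.1 hs).le]

lemma setIntegral_Ioi_mul_indicator_Iio {u : ℝ} (hu : 0 < u) :
    ∫ s in Ioi 0, g s * (Iio s).indicator 1 u = ∫ s in Ioi u, g s := by
  have hind (s : ℝ) : g s * (Iio s).indicator 1 u = (Ioi u).indicator g s := by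
    by_cases h : u < s <;> simp [h]
  simp_rw [hind, setIntegral_indicator measurableSet_Ioi,
    inter_eq_right.2 (Ioi_subset_Ioi hu.le)]

lemma integrableOn_sq_integral_Ioi (hg : IntegrableOn (fun s ↦ √s * g s) (Ioi 0)) :
    IntegrableOn (fun u ↦ (∫ s in Ioi u, g s) ^ 2) (Ioi 0) := by
  refine IntegrableOn.congr_fun (l2Integrable_mul_indicator_Iio hg).memLp_integral.integrable_sq
    (fun u hu ↦ ?_) measurableSet_Ioi
  simp only [setIntegral_Ioi_mul_indicator_Iio hu]

lemma integral_sq_integral_Ioi (hg : IntegrableOn (fun s ↦ √s * g s) (Ioi 0)) :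
    ∫ u in Ioi 0, (∫ s in Ioi u, g s) ^ 2 =
      ∫ p in Ioi 0 ×ˢ Ioi 0, g p.1 * g p.2 * min p.1 p.2 := by
  calc ∫ u in Ioi 0, (∫ s in Ioi u, g s) ^ 2
      = ∫ u in Ioi 0, (∫ s in Ioi 0, g s * (Iio s).indicator 1 u) ^ 2 :=
        setIntegral_congr_fun measurableSet_Ioi fun u hu ↦ by
          simp only [setIntegral_Ioi_mul_indicator_Iio hu]
    _ = ∫ p in Ioi 0 ×ˢ Ioi 0, g p.1 * g p.2 * min p.1 p.2 := by
      rw [(l2Integrable_mul_indicator_Iio hg).integral_integral_sq, Measure.prod_restrict,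
        ← Measure.volume_eq_prod]
      refine setIntegral_congr_fun (measurableSet_Ioi.prod measurableSet_Ioi) fun p hp ↦ ?_
      simp_rw [mul_mul_mul_comm, integral_const_mul,
        setIntegral_Ioi_indicator_Iio_mul_indicator_Iio,
        max_eq_left (le_min (mem_Ioi.1 hp.1).le (mem_Ioi.1 hp.2).le)]

lemma setIntegral_Ioi_mul_toNNReal (φ : ℝ → ℝ) :
    ∫ s in Ioi 0, g s * φ s.toNNReal = ∫ s in Ioi 0, g s * φ s :=
  setIntegral_congr_fun measurableSet_Ioi fun s hs ↦ by
    simp only [coe_toNNReal s (mem_Ioi.1 hs).le]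

end HalfLine

lemma aestronglyMeasurable_uncurry_of_ae_continuous {ι Ω : Type*} [TopologicalSpace ι]
    [TopologicalSpace.MetrizableSpace ι] [SecondCountableTopology ι] [MeasurableSpace ι]
    [OpensMeasurableSpace ι] [MeasurableSpace Ω] {ν : Measure ι} {P : Measure Ω}
    {B : ι → Ω → ℝ} (hmeas : ∀ t, Measurable (B t))
    (hcont : ∀ᵐ ω ∂P, Continuous fun t ↦ B t ω) :
    AEStronglyMeasurable (Function.uncurry B) (ν.prod P) := by
  obtain ⟨N, hsub, hN, hPN⟩ := exists_measurable_superset_of_null (ae_iff.1 hcont)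
  refine AEMeasurable.aestronglyMeasurable
    ⟨Function.uncurry fun t ↦ Nᶜ.indicator (B t), ?_, ?_⟩
  · refine measurable_uncurry_of_continuous_of_measurable (fun ω ↦ ?_)
      fun t ↦ (hmeas t).indicator hN.compl
    by_cases hω : ω ∈ N
    · simpa [hω] using continuous_const
    · simpa [hω] using not_not.1 fun h ↦ hω (hsub h)
  · filter_upwards [Measure.quasiMeasurePreserving_snd.ae (measure_eq_zero_iff_ae_notMem.1 hPN)]
      with z hz
    exact (indicator_of_mem (s := Nᶜ) hz (B z.1)).symm

namespace IsBrownianMotion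

open scoped NNReal

variable {Ω : Type*} [MeasurableSpace Ω] {P : Measure Ω} {B : ℝ → Ω → ℝ} {g : ℝ → ℝ}

lemma hasLaw_eval_half (hB : IsBrownianMotion P B) (t : ℝ≥0) :
    HasLaw (B (t / 2)) (gaussianReal 0 t) P where
  aemeasurable := (hB.meas _).aemeasurable
  map_eq := by
    have hsub : B (t / 2) =ᵐ[P] fun ω ↦ B (t / 2) ω - B 0 ω := by
      filter_upwards [hB.init] with ω hω
      simp [hω]
    rw [Measure.map_congr hsub, hB.gauss 0 (t / 2) le_rfl (by positivity)]
    congr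
    simp [mul_div_cancel₀]

lemma isPreBrownianReal (hB : IsBrownianMotion P B) :
    IsPreBrownianReal (fun t : ℝ≥0 ↦ B (t / 2)) P := by
  refine HasIndepIncrements.isPreBrownianReal_of_hasLaw hB.hasLaw_eval_half fun n t ht ↦ ?_
  -- `hB.indep` expects an infinite sequence of times, so `t` is prolonged by its last value.
  have hmono : Monotone fun k : ℕ ↦ (t ⟨min k n, by omega⟩ : ℝ) / 2 := fun j k hjk ↦ by
    have := ht (show (⟨min j n, by omega⟩ : Fin (n + 1)) ≤ ⟨min k n, by omega⟩ from
      min_le_min_right n hjk)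
    dsimp only
    gcongr
  convert hB.indep n _ hmono using 8 with i ω
  · exact Fin.ext (min_eq_left i.2).symm
  · exact Fin.ext (min_eq_left i.2.le).symm

lemma isGaussianProcess (hB : IsBrownianMotion P B) :
    IsGaussianProcess (fun t : ℝ≥0 ↦ B t) P := by
  simpa [Function.comp_def] using hB.isPreBrownianReal.isGaussianProcess.comp_right (2 * ·)

lemma integral_eval (hB : IsBrownianMotion P B) (t : ℝ≥0) : ∫ ω, B t ω ∂P = 0 := by
  simpa using hB.isPreBrownianReal.integral_eval (2 * t)

lemma memLp_two (hB : IsBrownianMotion P B) (t : ℝ≥0) : MemLp (B t) 2 P :=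
  (hB.isGaussianProcess.hasGaussianLaw_eval t).memLp_two

lemma integral_mul_eval (hB : IsBrownianMotion P B) (s t : ℝ≥0) :
    ∫ ω, B s ω * B t ω ∂P = 2 * min (s : ℝ) t := by
  have := hB.isGaussianProcess.isProbabilityMeasure
  have hcov := hB.isPreBrownianReal.covariance_eval (2 * s) (2 * t)
  simp only [NNReal.coe_mul, NNReal.coe_ofNat, mul_div_cancel_left₀ _ (two_ne_zero' ℝ)] at hcov
  rw [covariance_eq_sub (hB.memLp_two s) (hB.memLp_two t), hB.integral_eval] at hcov
  simpa [mul_min_of_nonneg] using hcov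

-- Truncating negative times makes `B` a Gaussian process indexed by all of `ℝ`.
lemma l2Integrable_mul (hB : IsBrownianMotion P B)
    (hg : IntegrableOn (fun s ↦ √s * g s) (Ioi 0)) :
    L2Integrable (fun s ω ↦ g s * B s.toNNReal ω) (volume.restrict (Ioi 0)) P := by
  have := hB.isGaussianProcess.isProbabilityMeasure
  refine l2Integrable_mul_of_integrable (aestronglyMeasurable_of_integrableOn_sqrt_mul hg) ?_
    (fun s ↦ hB.memLp_two _) ?_
  · refine aestronglyMeasurable_uncurry_of_ae_continuous (fun s ↦ hB.meas _) ?_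
    filter_upwards [hB.cont] with ω hω
    fun_prop
  · refine IntegrableOn.congr_fun (hg.const_mul √2) (fun s hs ↦ ?_) measurableSet_Ioi
    simp_rw [sq, hB.integral_mul_eval, min_self, coe_toNNReal _ (mem_Ioi.1 hs).le,
      sqrt_mul zero_le_two, mul_assoc]

lemma integral_sq_integral_mul (hB : IsBrownianMotion P B)
    (hg : IntegrableOn (fun s ↦ √s * g s) (Ioi 0)) :
    ∫ ω, (∫ s in Ioi 0, g s * B s.toNNReal ω) ^ 2 ∂P =
      2 * ∫ u in Ioi 0, (∫ s in Ioi u, g s) ^ 2 := by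
  have := hB.isGaussianProcess.isProbabilityMeasure
  rw [(hB.l2Integrable_mul hg).integral_integral_sq, integral_sq_integral_Ioi hg,
    Measure.prod_restrict, ← Measure.volume_eq_prod, ← integral_const_mul]
  refine setIntegral_congr_fun (measurableSet_Ioi.prod measurableSet_Ioi) fun p hp ↦ ?_
  simp_rw [mul_mul_mul_comm, integral_const_mul, hB.integral_mul_eval,
    coe_toNNReal _ (mem_Ioi.1 hp.1).le, coe_toNNReal _ (mem_Ioi.1 hp.2).le]
  ring

lemma ae_integrableOn_mul (hB : IsBrownianMotion P B)
    (hg : IntegrableOn (fun s ↦ √s * g s) (Ioi 0)) :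
    ∀ᵐ ω ∂P, IntegrableOn (fun s ↦ g s * B s ω) (Ioi 0) := by
  have := hB.isGaussianProcess.isProbabilityMeasure
  filter_upwards [(hB.l2Integrable_mul hg).integrable_uncurry.prod_left_ae] with ω hω
  exact IntegrableOn.congr_fun hω
    (fun s hs ↦ by simp only [Function.uncurry_apply_pair, coe_toNNReal s (mem_Ioi.1 hs).le])
    measurableSet_Ioi

lemma map_integral_mul_eq_gaussianReal (hB : IsBrownianMotion P B)
    (hg : IntegrableOn (fun s ↦ √s * g s) (Ioi 0)) :
    P.map (fun ω ↦ ∫ s in Ioi 0, g s * B s ω) =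
      gaussianReal 0 (2 * ∫ u in Ioi 0, (∫ s in Ioi u, g s) ^ 2).toNNReal := by
  have := hB.isGaussianProcess.isProbabilityMeasure
  rw [← hB.integral_sq_integral_mul hg,
    funext fun ω ↦ (setIntegral_Ioi_mul_toNNReal (g := g) (B · ω)).symm]
  exact (hB.l2Integrable_mul hg).map_integral_eq_gaussianReal
    ((hB.isGaussianProcess.comp_right Real.toNNReal).smul g)
    fun s ↦ by rw [integral_const_mul, hB.integral_eval, mul_zero]

lemma integral_exp_mul_integral_mul (hB : IsBrownianMotion P B)
    (hg : IntegrableOn (fun s ↦ √s * g s) (Ioi 0)) (c : ℝ) :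
    ∫ ω, exp (c * ∫ s in Ioi 0, g s * B s ω) ∂P =
      exp (c ^ 2 * ∫ u in Ioi 0, (∫ s in Ioi u, g s) ^ 2) := by
  have hmgf := mgf_gaussianReal (hB.map_integral_mul_eq_gaussianReal hg) c
  have hnonneg : 0 ≤ ∫ u in Ioi 0, (∫ s in Ioi u, g s) ^ 2 := integral_nonneg fun _ ↦ sq_nonneg _
  rw [coe_toNNReal _ (by positivity)] at hmgf
  refine hmgf.trans (congrArg exp ?_)
  ring

end IsBrownianMotion

lemma exists_tendsto_forall_integral_Ioi_eq {f f' : ℝ → ℝ} {b : ℝ}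
    (hf : ∀ s ∈ Ioi b, HasDerivAt f (f' s) s) (hf' : ∀ a ∈ Ioi b, IntegrableOn f' (Ioi a)) :
    ∃ v, Tendsto f atTop (nhds v) ∧ ∀ a ∈ Ioi b, ∫ s in Ioi a, f' s = v - f a := by
  obtain ⟨c, hc⟩ := exists_gt b
  have hlim := tendsto_limUnder_of_hasDerivAt_of_integrableOn_Ioi
    (fun s hs ↦ hf s (hc.trans hs)) (hf' c hc)
  exact ⟨_, hlim, fun a ha ↦ integral_Ioi_of_hasDerivAt_of_tendsto'
    (fun s hs ↦ hf s (mem_Ioi.2 (lt_of_lt_of_le ha hs))) (hf' a ha) hlim⟩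

lemma integrableOn_sqrt_mul_of_isBigO {g : ℝ → ℝ} (hg : Continuous g)
    (hO : g =O[atTop] fun s ↦ 1 / s ^ 2) : IntegrableOn (fun s ↦ √s * g s) (Ioi 0) := by
  have hcont : Continuous fun s ↦ √s * g s := by fun_prop
  have hpow : (fun s ↦ √s * g s) =O[atTop] fun s : ℝ ↦ s ^ (-(3 / 2) : ℝ) := by
    refine ((isBigO_refl sqrt atTop).mul hO).congr' .rfl ?_
    filter_upwards [eventually_gt_atTop 0] with s hs
    rw [sqrt_eq_rpow, ← rpow_natCast, one_div (s ^ _), ← rpow_neg hs.le, ← rpow_add hs]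
    norm_num
  have hint : IntegrableOn (fun s ↦ √s * g s) (Ici 0) :=
    hcont.locallyIntegrable.locallyIntegrableOn _ |>.integrableOn_of_isBigO_atTop hpow
      (integrableAtFilter_rpow_atTop_iff.2 (by norm_num))
  exact hint.mono_set Ioi_subset_Ici_self

theorem stmt17_general {Ω : Type*} [MeasurableSpace Ω] {P : Measure Ω} {B : ℝ → Ω → ℝ}
    (hB : IsBrownianMotion P B) {f f' : ℝ → ℝ} (hf : ∀ s ∈ Ioi 0, HasDerivAt f (f' s) s)
    (hf' : IntegrableOn (fun s ↦ √s * f' s) (Ioi 0)) :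
    ∃ v : ℝ, Tendsto f atTop (nhds v) ∧
      IntegrableOn (fun s ↦ (f s - v) ^ 2) (Ioi 0) ∧
      (∀ᵐ ω ∂P, IntegrableOn (fun s ↦ f' s * B s ω) (Ioi 0)) ∧
      (∫ ω, exp ((1 / 2) * ∫ s in Ioi 0, f' s * B s ω) ∂P) =
        exp ((1 / 4) * ∫ s in Ioi 0, (f s - v) ^ 2) := by
  obtain ⟨v, hv, htail⟩ := exists_tendsto_forall_integral_Ioi_eq hf
    fun _ ↦ integrableOn_Ioi_of_integrableOn_sqrt_mul hf'
  have hsq : EqOn (fun u ↦ (∫ s in Ioi u, f' s) ^ 2) (fun u ↦ (f u - v) ^ 2) (Ioi 0) :=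
    fun u hu ↦ by simp only [htail u hu, sub_sq_comm]
  refine ⟨v, hv, (integrableOn_sq_integral_Ioi hf').congr_fun hsq measurableSet_Ioi,
    hB.ae_integrableOn_mul hf', ?_⟩
  rw [hB.integral_exp_mul_integral_mul hf', setIntegral_congr_fun measurableSet_Ioi hsq]
  norm_num

theorem stmt17 {Ω : Type*} [MeasurableSpace Ω] (P : Measure Ω) [IsProbabilityMeasure P]
    (B : ℝ → Ω → ℝ) (hB : IsBrownianMotion P B)
    (m : ℝ → ℝ) (hmC2 : ContDiff ℝ 2 m)
    (hm'' : (fun s => deriv (deriv m) s) =O[atTop] fun s => 1 / s ^ 2) :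
    ∃ v : ℝ, Tendsto (deriv m) atTop (nhds v) ∧
      IntegrableOn (fun s => (deriv m s - v) ^ 2) (Set.Ioi (0:ℝ)) ∧
      (∀ᵐ ω ∂P, IntegrableOn (fun s => deriv (deriv m) s * B s ω) (Set.Ioi (0:ℝ))) ∧
      (∫ ω, Real.exp ((1/2) * ∫ s in Set.Ioi (0:ℝ), deriv (deriv m) s * B s ω) ∂P) =
        Real.exp ((1/4) * ∫ s in Set.Ioi (0:ℝ), (deriv m s - v) ^ 2) := by
  have hm' : ContDiff ℝ 1 (deriv m) := (contDiff_succ_iff_deriv (n := 1)).1 hmC2 |>.2.2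
  exact stmt17_general hB (fun s _ ↦ (hm'.differentiable one_ne_zero s).hasDerivAt)
    (integrableOn_sqrt_mul_of_isBigO (hm'.continuous_deriv le_rfl) hm'')
end
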